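/- arXiv:1806.06389 — 2 statements merged into one kernel-verified Lean document; each statement's English description precedes it below -/
import Mathlib

section
/- Let d ≥ 1 and let γ be the standard Gaussian measure on ℝ^d. For every centered probability measure μ on ℝ^d (i.e. ∫ x dμ(x) = 0) with finite second moment, and every probability measure ν on ℝ^d with finite second moment, one has W₂(μ, ν)² ≤ 2 Ent_γ(μ) + 2 Ent_γ(ν). -/
open MeasureTheory ENNReal
open scoped RealInnerProductSpace

/-- The standard Gaussian measure on `ℝ^d`, with density
`(2π)^{-d/2} exp(-|x|²/2)` with respect to Lebesgue measure. -/
noncomputable def stdGaussian (d : ℕ) : Measure (EuclideanSpace ℝ (Fin d)) :=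
  volume.withDensity fun x =>
    ENNReal.ofReal ((2 * Real.pi) ^ (-(d : ℝ) / 2) * Real.exp (-‖x‖ ^ 2 / 2))

/-- `π` is a coupling of `μ` and `ν`: a measure on the product with the given marginals. -/
def IsCoupling {E : Type*} [MeasurableSpace E] (π : Measure (E × E)) (μ ν : Measure E) : Prop :=
  π.map Prod.fst = μ ∧ π.map Prod.snd = ν

/-- The squared `L²` Kantorovich-Wasserstein distance `W₂(μ,ν)²`: the infimum of
`∫ |x-y|² dπ` over all couplings `π` of `μ` and `ν`. -/
noncomputable def W2sq {E : Type*} [MeasurableSpace E] [NormedAddCommGroup E]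
    (μ ν : Measure E) : ℝ≥0∞ :=
  ⨅ (π : Measure (E × E)) (_ : IsCoupling π μ ν), ∫⁻ p, (‖p.1 - p.2‖₊ : ℝ≥0∞) ^ 2 ∂π

open Classical in
/-- The relative entropy (KL divergence) `Ent_γ(μ) = ∫ log(dμ/dγ) dμ` if `μ ≪ γ` (and the
integral makes sense), and `+∞` otherwise. -/
noncomputable def relEnt {E : Type*} [MeasurableSpace E] (μ γ : Measure E) : ℝ≥0∞ :=
  if μ ≪ γ ∧ Integrable (fun x => Real.log (μ.rnDeriv γ x).toReal) μ
  then ENNReal.ofReal (∫ x, Real.log (μ.rnDeriv γ x).toReal ∂μ)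
  else ∞

section EntropyCorrelation

open ProbabilityTheory Set Filter Topology

/-- The quantile function of a measure on the line, extended by zero outside `(0, 1)`. -/
noncomputable def quantile (α : Measure ℝ) (u : ℝ) : ℝ :=
  open Classical in if u ∈ Ioo (0 : ℝ) 1 then sInf {t | u ≤ cdf α t} else 0

section Quantile

variable {α β : Measure ℝ}

theorem quantile_le_iff (α : Measure ℝ) {u : ℝ} (hu : u ∈ Ioo (0 : ℝ) 1) (t : ℝ) :
    quantile α u ≤ t ↔ u ≤ cdf α t := by
  have hne : {t | u ≤ cdf α t}.Nonempty :=
    (((tendsto_cdf_atTop α).eventually (lt_mem_nhds hu.2)).exists).imp fun _ h => le_of_lt h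
  have hbdd : BddBelow {t | u ≤ cdf α t} := by
    obtain ⟨b, hb⟩ := ((tendsto_cdf_atBot α).eventually (gt_mem_nhds hu.1)).exists
    exact ⟨b, fun t ht => le_of_not_gt fun h =>
      (lt_irrefl u) (ht.trans_lt ((monotone_cdf α h.le).trans_lt hb))⟩
  have hq : quantile α u = sInf {t | u ≤ cdf α t} := if_pos hu
  rw [hq]
  refine ⟨fun h => ?_, fun h => csInf_le hbdd h⟩
  have hlim : Tendsto (cdf α) (𝓝[>] t) (𝓝 (cdf α t)) :=
    ((cdf α).right_continuous t).mono_left (nhdsWithin_mono _ Ioi_subset_Ici_self)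
  refine ge_of_tendsto hlim ?_
  filter_upwards [self_mem_nhdsWithin] with s hs
  obtain ⟨r, hr, hrs⟩ := exists_lt_of_csInf_lt hne (h.trans_lt hs)
  exact le_trans hr (monotone_cdf α hrs.le)

theorem monotoneOn_quantile (α : Measure ℝ) : MonotoneOn (quantile α) (Ioo 0 1) := by
  intro u hu v hv huv
  rw [quantile_le_iff α hu]
  exact huv.trans ((quantile_le_iff α hv _).1 le_rfl)

theorem measurable_quantile_kernel {E : Type*} [MeasurableSpace E] (κ : Kernel E ℝ)
    [IsMarkovKernel κ] : Measurable fun p : E × ℝ => quantile (κ p.1) p.2 := by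
  refine measurable_of_Iic fun t => ?_
  have hU : MeasurableSet {p : E × ℝ | p.2 ∈ Ioo (0 : ℝ) 1} := measurable_snd measurableSet_Ioo
  have hc : Measurable fun p : E × ℝ => cdf (κ p.1) t := by
    simp_rw [cdf_eq_real]
    exact ((κ.measurable_coe measurableSet_Iic).comp measurable_fst).ennreal_toReal
  have heq : (fun p : E × ℝ => quantile (κ p.1) p.2) ⁻¹' Iic t =
      ({p : E × ℝ | p.2 ∈ Ioo (0 : ℝ) 1} ∩ {p | p.2 ≤ cdf (κ p.1) t}) ∪
      ({p : E × ℝ | p.2 ∈ Ioo (0 : ℝ) 1}ᶜ ∩ {_p | 0 ≤ t}) := by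
    ext p
    by_cases hp : p.2 ∈ Ioo (0 : ℝ) 1
    · simp only [mem_preimage, mem_Iic, quantile_le_iff _ hp, mem_union, mem_inter_iff,
        mem_ofPred_eq, hp, mem_compl_iff, true_and, not_true, false_and, or_false]
    · have : quantile (κ p.1) p.2 = 0 := if_neg hp
      simp only [mem_preimage, mem_Iic, this, mem_union, mem_inter_iff,
        mem_ofPred_eq, hp, mem_compl_iff, true_and, false_and, false_or, not_false_eq_true]
  rw [heq]
  exact (hU.inter (measurableSet_le measurable_snd hc)).union
    (hU.compl.inter (MeasurableSet.const _))

theorem measurable_quantile (α : Measure ℝ) [IsProbabilityMeasure α] :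
    Measurable (quantile α) :=
  (measurable_quantile_kernel (Kernel.const Unit α)).comp (measurable_prodMk_left (x := ()))

theorem isProbabilityMeasure_volume_Ioo :
    IsProbabilityMeasure ((volume : Measure ℝ).restrict (Ioo 0 1)) := ⟨by simp⟩

theorem map_quantile (α : Measure ℝ) [IsProbabilityMeasure α] :
    (volume.restrict (Ioo (0 : ℝ) 1)).map (quantile α) = α := by
  have := isProbabilityMeasure_volume_Ioo
  have hm := measurable_quantile α
  have := Measure.isProbabilityMeasure_map (μ := volume.restrict (Ioo (0 : ℝ) 1)) hm.aemeasurable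
  refine Measure.ext_of_Iic _ _ fun t => ?_
  rw [Measure.map_apply hm measurableSet_Iic, Measure.restrict_apply (hm measurableSet_Iic),
    ← ofReal_cdf]
  have h1 : quantile α ⁻¹' Iic t ∩ Ioo 0 1 = Ioo 0 1 ∩ Iic (cdf α t) := by
    ext u
    simp only [mem_inter_iff, mem_preimage, mem_Iic]
    exact ⟨fun h => ⟨h.2, (quantile_le_iff α h.2 t).1 h.1⟩,
      fun h => ⟨(quantile_le_iff α h.1 t).2 h.2, h.1⟩⟩
  rw [h1]
  have h0 := cdf_nonneg α t
  have h1 := cdf_le_one α t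
  apply le_antisymm
  · calc volume (Ioo 0 1 ∩ Iic (cdf α t)) ≤ volume (Icc 0 (cdf α t)) :=
        measure_mono fun u hu => ⟨hu.1.1.le, hu.2⟩
      _ = _ := by simp
  · calc ENNReal.ofReal (cdf α t) = volume (Ioo 0 (cdf α t)) := by simp
      _ ≤ volume (Ioo 0 1 ∩ Iic (cdf α t)) := measure_mono fun u (hu : u ∈ Ioo 0 (cdf α t)) =>
        ⟨⟨hu.1, hu.2.trans_le h1⟩, hu.2.le⟩

theorem cdf_quantile (α : Measure ℝ) [IsProbabilityMeasure α] [NullSingletonClass α] {u : ℝ}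
    (hu : u ∈ Ioo (0 : ℝ) 1) : cdf α (quantile α u) = u := by
  refine le_antisymm ?_ ((quantile_le_iff α hu _).1 le_rfl)
  have hatom : (cdf α).measure {quantile α u} = 0 := by
    rw [measure_cdf]; exact measure_singleton _
  rw [StieltjesFunction.measure_singleton, ENNReal.ofReal_eq_zero, sub_nonpos] at hatom
  refine hatom.trans (le_of_tendsto ((monotone_cdf α).tendsto_leftLim _) ?_)
  filter_upwards [self_mem_nhdsWithin] with s hs
  by_contra! hlt
  exact (not_lt.2 ((quantile_le_iff α hu s).2 hlt.le)) hs

theorem ae_hasDerivAt_quantile {a : ℝ → ℝ} (ha : Measurable a) (ha0 : ∀ t, 0 ≤ a t)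
    [IsProbabilityMeasure α] (hα : α = volume.withDensity fun t => ENNReal.ofReal (a t)) :
    ∀ᵐ u ∂volume.restrict (Ioo (0 : ℝ) 1),
      ∃ q, HasDerivAt (quantile α) q u ∧ 0 < q ∧ a (quantile α u) = q⁻¹ := by
  have hac : α ≪ volume := hα ▸ withDensity_absolutelyContinuous _ _
  have : NullSingletonClass α := ⟨fun x => hac (measure_singleton x)⟩
  have hcdf : ∀ᵐ t ∂α, HasDerivAt (cdf α) (a t) t := by
    refine hac.ae_le ?_
    have hrn : α.rnDeriv volume =ᵐ[volume] fun t => ENNReal.ofReal (a t) := by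
      conv_lhs => rw [hα]
      exact Measure.rnDeriv_withDensity _ (by fun_prop)
    filter_upwards [(cdf α).ae_hasDerivAt, hrn] with t ht hrt
    rw [measure_cdf, hrt, ENNReal.toReal_ofReal (ha0 t)] at ht
    exact ht
  have hcdf' : ∀ᵐ u ∂volume.restrict (Ioo (0 : ℝ) 1),
      HasDerivAt (cdf α) (a (quantile α u)) (quantile α u) := by
    rw [← map_quantile α] at hcdf
    simpa only [map_quantile] using ae_of_ae_map (measurable_quantile α).aemeasurable hcdf
  filter_upwards [hcdf', (monotoneOn_quantile α).ae_differentiableWithinAt measurableSet_Ioo,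
    ae_restrict_mem measurableSet_Ioo] with u h1 h2 hu
  have hd := (h2.differentiableAt (Ioo_mem_nhds hu.1 hu.2)).hasDerivAt
  have hcomp : HasDerivAt (fun u => cdf α (quantile α u))
      (a (quantile α u) * deriv (quantile α) u) u := h1.comp u hd
  have hid : HasDerivAt (fun u => cdf α (quantile α u)) 1 u := by
    refine (hasDerivAt_id u).congr_of_eventuallyEq ?_
    filter_upwards [Ioo_mem_nhds hu.1 hu.2] with v hv
    exact cdf_quantile α hv
  have hmul := hcomp.unique hid
  have hq0 : deriv (quantile α) u ≠ 0 := by rintro h; rw [h] at hmul; simp at hmul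
  have ha1 : a (quantile α u) = (deriv (quantile α) u)⁻¹ := eq_inv_of_mul_eq_one_left hmul
  refine ⟨_, hd, ?_, ha1⟩
  have := ha0 (quantile α u)
  rw [ha1] at this
  exact lt_of_le_of_ne (inv_nonneg.1 this) (Ne.symm hq0)

theorem quantile_pos [IsProbabilityMeasure α] (hα : α (Iic 0) = 0) {u : ℝ}
    (hu : u ∈ Ioo (0 : ℝ) 1) : 0 < quantile α u := by
  by_contra! h
  rw [quantile_le_iff α hu, cdf_eq_real, measureReal_def, hα] at h
  simp at h
  exact absurd hu.1 (not_lt.2 h)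

end Quantile

section HalfGaussian

/-- The distribution function of the half-normal law. -/
noncomputable def halfNormalCDF (w : ℝ) : ℝ :=
  ∫ t in (0 : ℝ)..w, √(2 / Real.pi) * Real.exp (-t ^ 2 / 2)

theorem hasDerivAt_halfNormalCDF (w : ℝ) :
    HasDerivAt halfNormalCDF (√(2 / Real.pi) * Real.exp (-w ^ 2 / 2)) w := by
  have hc : Continuous fun t : ℝ => √(2 / Real.pi) * Real.exp (-t ^ 2 / 2) := by fun_prop
  exact intervalIntegral.integral_hasDerivAt_right (hc.intervalIntegrable _ _)
    (hc.stronglyMeasurableAtFilter _ _) hc.continuousAt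

theorem monotone_halfNormalCDF : Monotone halfNormalCDF :=
  monotone_of_hasDerivAt_nonneg hasDerivAt_halfNormalCDF fun _ => by positivity

theorem halfNormalCDF_nonneg {w : ℝ} (hw : 0 ≤ w) : 0 ≤ halfNormalCDF w :=
  intervalIntegral.integral_nonneg hw fun _ _ => by positivity

theorem halfNormalCDF_le_one {w : ℝ} (hw : 0 ≤ w) : halfNormalCDF w ≤ 1 := by
  have hfun : (fun t : ℝ => √(2 / Real.pi) * Real.exp (-t ^ 2 / 2)) =
      fun t => √(2 / Real.pi) * Real.exp (-(1 / 2) * t ^ 2) := by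
    funext t; congr 2; ring
  have hinteg : Integrable fun t : ℝ => √(2 / Real.pi) * Real.exp (-t ^ 2 / 2) := by
    rw [hfun]
    exact (integrable_exp_neg_mul_sq (by norm_num)).const_mul _
  have htot : ∫ t in Ioi (0 : ℝ), √(2 / Real.pi) * Real.exp (-t ^ 2 / 2) = 1 := by
    rw [hfun, integral_const_mul, integral_gaussian_Ioi, ← mul_div_assoc,
      ← Real.sqrt_mul (by positivity)]
    have : 2 / Real.pi * (Real.pi / (1 / 2)) = 2 ^ 2 := by
      field_simp
    rw [this, Real.sqrt_sq (by norm_num)]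
    norm_num
  rw [halfNormalCDF, intervalIntegral.integral_of_le hw, ← htot]
  exact setIntegral_mono_set hinteg.integrableOn (ae_of_all _ fun _ => by positivity)
    (Ioc_subset_Ioi_self : Ioc 0 w ⊆ Ioi 0).eventuallyLE

/-- The pointwise arithmetic-geometric bound behind the transport estimate on the half-line. -/
theorem log_add_log_le_of_pos {Q R q r : ℝ} (hQ : 0 < Q) (hR : 0 < R) (hq : 0 < q) (hr : 0 < r) :
    Real.log q + Real.log r ≤ Real.log (Real.pi / 2) + Q * R +
      2 * (√(2 / Real.pi) * Real.exp (-(√(Q * R)) ^ 2 / 2) *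
        ((q * R + Q * r) / (2 * √(Q * R))) - 1) := by
  have hπ := Real.pi_pos
  have hQR : 0 < Q * R := mul_pos hQ hR
  set D := √(2 / Real.pi) * Real.exp (-(√(Q * R)) ^ 2 / 2) *
        ((q * R + Q * r) / (2 * √(Q * R))) with hD
  have hDpos : 0 < D := by positivity
  have h1 : Real.log D ≤ D - 1 := Real.log_le_sub_one_of_pos hDpos
  have hsq : D ^ 2 = (2 / Real.pi) * Real.exp (-(Q * R)) *
      ((q * R + Q * r) ^ 2 / (4 * (Q * R))) := by
    rw [hD, mul_pow, mul_pow, div_pow, mul_pow, Real.sq_sqrt hQR.le,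
      Real.sq_sqrt (by positivity), ← Real.exp_nat_mul]
    congr 3
    · push_cast; ring_nf
    · norm_num
  have hge : (2 / Real.pi) * Real.exp (-(Q * R)) * (q * r) ≤ D ^ 2 := by
    rw [hsq]
    refine mul_le_mul_of_nonneg_left ?_ (by positivity)
    rw [le_div_iff₀ (by positivity)]
    nlinarith [sq_nonneg (q * R - Q * r)]
  have h2 := Real.log_le_log (by positivity) hge
  rw [Real.log_mul (by positivity) (by positivity), Real.log_mul (by positivity) (by positivity),
    Real.log_exp, Real.log_mul hq.ne' hr.ne', Real.log_pow] at h2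
  have h3 : Real.log (2 / Real.pi) = - Real.log (Real.pi / 2) := by
    rw [← Real.log_inv, inv_div]
  rw [h3] at h2
  push_cast at h2
  linarith

/-- Comonotone coupling of two absolutely continuous laws on the half-line. -/
theorem integral_log_density_quantile_le {α β : Measure ℝ} [IsProbabilityMeasure α]
    [IsProbabilityMeasure β] {a b : ℝ → ℝ} (ha : Measurable a) (ha0 : ∀ t, 0 ≤ a t)
    (hb : Measurable b) (hb0 : ∀ t, 0 ≤ b t)
    (hα : α = volume.withDensity fun t => ENNReal.ofReal (a t))
    (hβ : β = volume.withDensity fun t => ENNReal.ofReal (b t))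
    (hα0 : α (Iic 0) = 0) (hβ0 : β (Iic 0) = 0)
    (hinteg : Integrable (fun u => Real.log (a (quantile α u)) + Real.log (b (quantile β u)))
      (volume.restrict (Ioo (0 : ℝ) 1)))
    (hmul : Integrable (fun u => quantile α u * quantile β u)
      (volume.restrict (Ioo (0 : ℝ) 1))) :
    -∫ u in Ioo (0 : ℝ) 1, (Real.log (a (quantile α u)) + Real.log (b (quantile β u))) ≤
      Real.log (Real.pi / 2) + ∫ u in Ioo (0 : ℝ) 1, quantile α u * quantile β u := by
  have := isProbabilityMeasure_volume_Ioo
  let V : ℝ → ℝ := fun u =>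
    if u ≤ 0 then 0 else if 1 ≤ u then 1 else halfNormalCDF √(quantile α u * quantile β u)
  have hVin : ∀ u ∈ Ioo (0 : ℝ) 1, V u = halfNormalCDF √(quantile α u * quantile β u) := by
    intro u hu
    simp only [V, not_le.2 hu.1, not_le.2 hu.2, if_false]
  have hVmono : Monotone V := by
    intro u v huv
    rcases le_or_gt u 0 with hu | hu
    · simp only [V, hu, if_true]
      split_ifs
      · exact le_rfl
      · exact zero_le_one
      · exact halfNormalCDF_nonneg (Real.sqrt_nonneg _)
    rcases le_or_gt 1 v with hv | hv
    · have hv0 : ¬ v ≤ 0 := by linarith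
      simp only [V, hv, hv0, not_le.2 hu, if_true, if_false]
      split_ifs
      · exact le_rfl
      · exact halfNormalCDF_le_one (Real.sqrt_nonneg _)
    have hu' : u ∈ Ioo (0 : ℝ) 1 := ⟨hu, huv.trans_lt hv⟩
    have hv' : v ∈ Ioo (0 : ℝ) 1 := ⟨hu.trans_le huv, hv⟩
    rw [hVin u hu', hVin v hv']
    refine monotone_halfNormalCDF (Real.sqrt_le_sqrt ?_)
    exact mul_le_mul (monotoneOn_quantile α hu' hv' huv) (monotoneOn_quantile β hu' hv' huv)
      (quantile_pos hβ0 hu').le (quantile_pos hα0 hv').le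
  have hIoo : ∀ f : ℝ → ℝ, ∫ u in (0 : ℝ)..1, f u = ∫ u in Ioo (0 : ℝ) 1, f u := fun f => by
    rw [intervalIntegral.integral_of_le zero_le_one, integral_Ioc_eq_integral_Ioo]
  have hVint : Integrable (deriv V) (volume.restrict (Ioo (0 : ℝ) 1)) :=
    ((intervalIntegrable_iff_integrableOn_Ioo_of_le zero_le_one).1
      (hVmono.monotoneOn _).intervalIntegrable_deriv)
  have hVle : ∫ u in Ioo (0 : ℝ) 1, deriv V u ≤ 1 := by
    have h := (hVmono.monotoneOn (uIcc 0 1)).intervalIntegral_deriv_mem_uIcc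
    have h01 : V 1 - V 0 = 1 := by simp [V]
    rw [h01, uIcc_of_le zero_le_one, hIoo] at h
    exact h.2
  have hpt : ∀ᵐ u ∂volume.restrict (Ioo (0 : ℝ) 1),
      -(Real.log (a (quantile α u)) + Real.log (b (quantile β u))) ≤
        (Real.log (Real.pi / 2) + quantile α u * quantile β u) + 2 * (deriv V u - 1) := by
    filter_upwards [ae_hasDerivAt_quantile ha ha0 hα, ae_hasDerivAt_quantile hb hb0 hβ,
      ae_restrict_mem measurableSet_Ioo] with u ⟨q, hq, hq0, hqa⟩ ⟨r, hr, hr0, hrb⟩ hu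
    have hQ := quantile_pos hα0 hu
    have hR := quantile_pos hβ0 hu
    have hQR : 0 < quantile α u * quantile β u := mul_pos hQ hR
    have hd : HasDerivAt V (√(2 / Real.pi) *
        Real.exp (-(√(quantile α u * quantile β u)) ^ 2 / 2) *
        ((q * quantile β u + quantile α u * r) / (2 * √(quantile α u * quantile β u)))) u := by
      refine HasDerivAt.congr_of_eventuallyEq (f := fun u =>
        halfNormalCDF √(quantile α u * quantile β u)) ?_ ?_
      · exact (hasDerivAt_halfNormalCDF _).comp u ((hq.mul hr).sqrt hQR.ne')
      · filter_upwards [Ioo_mem_nhds hu.1 hu.2] with v hv using hVin v hv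
    rw [hd.deriv, hqa, hrb, Real.log_inv, Real.log_inv]
    have := log_add_log_le_of_pos hQ hR hq0 hr0
    linarith
  rw [← integral_neg]
  calc _ ≤ ∫ u in Ioo (0 : ℝ) 1, ((Real.log (Real.pi / 2) + quantile α u * quantile β u) +
        2 * (deriv V u - 1)) := by
        refine integral_mono_ae hinteg.neg ?_ hpt
        exact ((integrable_const _).add hmul).add ((hVint.sub (integrable_const _)).const_mul 2)
    _ = (Real.log (Real.pi / 2) + ∫ u in Ioo (0 : ℝ) 1, quantile α u * quantile β u) +
        2 * ((∫ u in Ioo (0 : ℝ) 1, deriv V u) - 1) := by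
        have h1 := integral_add (μ := volume.restrict (Ioo (0 : ℝ) 1))
          ((integrable_const (Real.log (Real.pi / 2))).add hmul)
          ((hVint.sub (integrable_const (1 : ℝ))).const_mul 2)
        have h2 := integral_add (μ := volume.restrict (Ioo (0 : ℝ) 1))
          (integrable_const (Real.log (Real.pi / 2))) hmul
        have h3 := integral_sub hVint (integrable_const (1 : ℝ))
        simp only [Pi.add_apply, Pi.sub_apply, integral_const_mul, integral_const, probReal_univ,
          one_smul] at h1 h2 h3
        rw [h1, h2, h3]
    _ ≤ _ := by linarith

end HalfGaussian

/-- `μ` is a probability measure with density `f` with respect to `m`, and its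
differential entropy `-∫ log f ∂μ` is finite. -/
structure HasFiniteEntropy {Ω : Type*} [MeasurableSpace Ω] (m μ : Measure Ω) (f : Ω → ℝ) :
    Prop where
  measurable : Measurable f
  nonneg : ∀ x, 0 ≤ f x
  eq_withDensity : μ = m.withDensity fun x => ENNReal.ofReal (f x)
  isProbabilityMeasure : IsProbabilityMeasure μ
  integrable_log : Integrable (fun x => Real.log (f x)) μ

section Entropy

variable {Ω Ω' : Type*} [MeasurableSpace Ω] [MeasurableSpace Ω'] {m μ : Measure Ω}
  {m' : Measure Ω'} {f : Ω → ℝ}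

theorem ae_pos_of_eq_withDensity (hf : Measurable f)
    (hμ : μ = m.withDensity fun x => ENNReal.ofReal (f x)) : ∀ᵐ x ∂μ, 0 < f x := by
  rw [hμ, ae_withDensity_iff (by fun_prop)]
  refine ae_of_all _ fun x hx => ?_
  by_contra! h
  exact hx (ENNReal.ofReal_eq_zero.2 h)

theorem HasFiniteEntropy.map (h : HasFiniteEntropy m μ f) (e : Ω ≃ᵐ Ω')
    (he : MeasurePreserving e m m') : HasFiniteEntropy m' (μ.map e) (f ∘ e.symm) where
  measurable := h.measurable.comp e.symm.measurable
  nonneg _ := h.nonneg _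
  eq_withDensity := by
    ext s hs
    rw [Measure.map_apply e.measurable hs, h.eq_withDensity,
      withDensity_apply _ (e.measurable hs), withDensity_apply _ hs, ← he.map_eq,
      setLIntegral_map hs (by have := h.measurable; have := e.symm.measurable; fun_prop)
        e.measurable]
    simp
  isProbabilityMeasure := by
    have := h.isProbabilityMeasure
    exact Measure.isProbabilityMeasure_map e.measurable.aemeasurable
  integrable_log := by
    rw [e.measurableEmbedding.integrable_map_iff]
    simpa [Function.comp_def] using h.integrable_log

theorem integral_log_comp_symm (e : Ω ≃ᵐ Ω') :
    ∫ x, Real.log ((f ∘ e.symm) x) ∂μ.map e = ∫ x, Real.log (f x) ∂μ := by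
  rw [e.measurableEmbedding.integral_map]
  simp

theorem cond_eq_withDensity (h : HasFiniteEntropy m μ f) {s : Set Ω} (hs : MeasurableSet s)
    (hp : μ.real s ≠ 0) : μ[|s] =
      m.withDensity fun x => ENNReal.ofReal (s.indicator (fun x => (μ.real s)⁻¹ * f x) x) := by
  have := h.isProbabilityMeasure
  have hp0 : 0 ≤ μ.real s := measureReal_nonneg
  ext t ht
  rw [cond_apply hs, withDensity_apply _ ht]
  have h1 : (fun x => ENNReal.ofReal (s.indicator (fun x => (μ.real s)⁻¹ * f x) x)) =
      s.indicator fun x => (μ s)⁻¹ * ENNReal.ofReal (f x) := by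
    funext x
    by_cases hx : x ∈ s
    · simp only [indicator_of_mem hx]
      rw [ENNReal.ofReal_mul (by positivity), measureReal_def, ← ENNReal.toReal_inv,
        ENNReal.ofReal_toReal]
      rw [measureReal_def] at hp
      exact ENNReal.inv_ne_top.2 fun h => hp (by simp [h])
    · simp only [indicator_of_notMem hx, ENNReal.ofReal_zero]
  rw [h1, lintegral_indicator hs, Measure.restrict_restrict hs,
    lintegral_const_mul _ (by have := h.measurable; fun_prop)]
  congr 1
  conv_lhs => rw [h.eq_withDensity]
  rw [withDensity_apply _ (hs.inter ht)]

theorem ae_cond_log_indicator (h : HasFiniteEntropy m μ f) {s : Set Ω} (hs : MeasurableSet s)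
    (hp : μ.real s ≠ 0) : ∀ᵐ x ∂μ[|s],
      Real.log (s.indicator (fun x => (μ.real s)⁻¹ * f x) x) =
        Real.log (f x) - Real.log (μ.real s) := by
  have hac : μ[|s] ≪ μ := cond_absolutelyContinuous
  filter_upwards [hac.ae_le (ae_pos_of_eq_withDensity h.measurable h.eq_withDensity),
    ae_cond_mem hs] with x hx hxs
  rw [indicator_of_mem hxs, Real.log_mul (inv_ne_zero hp) hx.ne', Real.log_inv]
  ring

theorem integrable_cond_of_integrable {F : Type*} [NormedAddCommGroup F] {g : Ω → F}
    (hg : Integrable g μ) {s : Set Ω} (hs : μ s ≠ 0) : Integrable g μ[|s] :=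
  (hg.restrict (s := s)).smul_measure (ENNReal.inv_ne_top.2 hs)

theorem HasFiniteEntropy.cond (h : HasFiniteEntropy m μ f) {s : Set Ω} (hs : MeasurableSet s)
    (hp : μ.real s ≠ 0) :
    HasFiniteEntropy m μ[|s] (s.indicator fun x => (μ.real s)⁻¹ * f x) where
  measurable := (h.measurable.const_mul _).indicator hs
  nonneg := indicator_nonneg fun x _ => mul_nonneg (by positivity) (h.nonneg x)
  eq_withDensity := cond_eq_withDensity h hs hp
  isProbabilityMeasure := by
    have := h.isProbabilityMeasure
    exact cond_isProbabilityMeasure fun h0 => hp (by simp [measureReal_def, h0])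
  integrable_log := by
    have := h.isProbabilityMeasure
    have h0 : μ s ≠ 0 := fun h0 => hp (by simp [measureReal_def, h0])
    have := cond_isProbabilityMeasure h0
    refine Integrable.congr ((integrable_cond_of_integrable h.integrable_log h0).sub
      (integrable_const (Real.log (μ.real s)))) ?_
    filter_upwards [ae_cond_log_indicator h hs hp] with x hx using hx.symm

theorem integral_cond_eq {F : Type*} [NormedAddCommGroup F] [NormedSpace ℝ F] (g : Ω → F)
    (s : Set Ω) : ∫ x, g x ∂μ[|s] = (μ.real s)⁻¹ • ∫ x in s, g x ∂μ := by
  rw [ProbabilityTheory.cond, integral_smul_measure, ENNReal.toReal_inv, measureReal_def]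

theorem integral_log_cond (h : HasFiniteEntropy m μ f) {s : Set Ω} (hs : MeasurableSet s)
    (hp : μ.real s ≠ 0) :
    ∫ x, Real.log (s.indicator (fun x => (μ.real s)⁻¹ * f x) x) ∂μ[|s] =
      (μ.real s)⁻¹ * ∫ x in s, Real.log (f x) ∂μ - Real.log (μ.real s) := by
  have := h.isProbabilityMeasure
  have h0 : μ s ≠ 0 := fun h0 => hp (by simp [measureReal_def, h0])
  have := cond_isProbabilityMeasure h0
  rw [integral_congr_ae (ae_cond_log_indicator h hs hp),
    integral_sub (integrable_cond_of_integrable h.integrable_log h0) (integrable_const _),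
    integral_cond_eq, integral_const, probReal_univ, one_smul, smul_eq_mul]

theorem mul_neg_log_le {r w : ℝ} (hr : 0 ≤ r) (hw : 0 ≤ w) :
    r * max (-Real.log r) 0 ≤ r * w + 2 * Real.exp (-w / 2) := by
  have hexp := Real.exp_pos (-w / 2)
  rcases hr.eq_or_lt with rfl | hr
  · simp [hexp.le]
  rcases le_or_gt (Real.exp (-w)) r with h | h
  · have h1 : -w ≤ Real.log r := by
      simpa using Real.log_le_log (Real.exp_pos _) h
    have : max (-Real.log r) 0 ≤ w := max_le (by linarith) hw
    nlinarith [mul_le_mul_of_nonneg_left this hr.le]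
  · have hv : 0 < √r := Real.sqrt_pos.2 hr
    have hvr : √r * √r = r := Real.mul_self_sqrt hr.le
    have hve : √r ≤ Real.exp (-w / 2) := by
      rw [Real.sqrt_le_left hexp.le, ← Real.exp_nat_mul]
      have h2 : ((2 : ℕ) : ℝ) * (-w / 2) = -w := by push_cast; ring
      rw [h2]
      exact h.le
    have hlog : Real.log r = 2 * Real.log √r := by rw [Real.log_sqrt hr.le]; ring
    have hinv : 1 - (√r)⁻¹ ≤ Real.log √r := Real.one_sub_inv_le_log_of_pos hv
    have hmax : max (-Real.log r) 0 ≤ 2 * (√r)⁻¹ := max_le (by linarith) (by positivity)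
    calc r * max (-Real.log r) 0 ≤ r * (2 * (√r)⁻¹) := mul_le_mul_of_nonneg_left hmax hr.le
      _ = 2 * √r := by field_simp; rw [Real.sq_sqrt hr.le]
      _ ≤ r * w + 2 * Real.exp (-w / 2) := by nlinarith [mul_nonneg hr.le hw]

/-- The negative part of the log-density is integrable as soon as a moment with
sufficiently fast growing weight is finite. -/
theorem integrable_negPart_log (hf : Measurable f) (hf0 : ∀ x, 0 ≤ f x)
    (hμ : μ = m.withDensity fun x => ENNReal.ofReal (f x)) {w : Ω → ℝ} (hw0 : ∀ x, 0 ≤ w x)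
    (hwμ : Integrable w μ) (hwm : Integrable (fun x => Real.exp (-w x / 2)) m) :
    Integrable (fun x => max (-Real.log (f x)) 0) μ := by
  have hfm : Measurable fun x => ENNReal.ofReal (f x) := by fun_prop
  have hft : ∀ᵐ x ∂m, ENNReal.ofReal (f x) < ∞ := ae_of_all _ fun _ => ENNReal.ofReal_lt_top
  rw [hμ, integrable_withDensity_iff hfm hft] at hwμ ⊢
  simp only [ENNReal.toReal_ofReal (hf0 _)] at hwμ ⊢
  refine Integrable.mono' (hwμ.add (hwm.const_mul 2))
    (Measurable.aestronglyMeasurable (by fun_prop)) (ae_of_all _ fun x => ?_)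
  have h := mul_neg_log_le (hf0 x) (hw0 x)
  rw [Real.norm_of_nonneg (mul_nonneg (le_max_right _ _) (hf0 x))]
  simp only [Pi.add_apply]
  linarith

theorem integrable_of_negPart_of_le {g k : Ω → ℝ} (hg : AEStronglyMeasurable g μ)
    (hneg : Integrable (fun x => max (-g x) 0) μ) (hk : Integrable k μ)
    (hle : ∀ᵐ x ∂μ, g x ≤ k x) : Integrable g μ := by
  refine Integrable.mono' (hneg.add hk.norm) hg ?_
  filter_upwards [hle] with x hx
  simp only [Pi.add_apply]
  rw [Real.norm_eq_abs, abs_le]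
  have h1 := le_max_left (-g x) 0
  have h2 := le_max_right (-g x) 0
  have h3 := Real.le_norm_self (k x)
  have h4 := norm_nonneg (k x)
  constructor <;> linarith

end Entropy

section Disintegration

variable {E : Type*} [MeasurableSpace E] {m : Measure E} {μ : Measure (E × ℝ)} {f : E × ℝ → ℝ}

/-- Marginal density, conditional density, and conditional law of a measure with a density on
a product with the line. -/
structure IsConditionalDensity (m : Measure E) (μ : Measure (E × ℝ)) (f : E × ℝ → ℝ)
    (f' : E → ℝ) (a : E × ℝ → ℝ) (κ : Kernel E ℝ) : Prop where
  measurable_marginal : Measurable f'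
  marginal_nonneg : ∀ x, 0 ≤ f' x
  measurable_cond : Measurable a
  cond_nonneg : ∀ z, 0 ≤ a z
  isMarkovKernel : IsMarkovKernel κ
  fst_eq : μ.fst = m.withDensity fun x => ENNReal.ofReal (f' x)
  eq_withDensity : μ = (μ.fst.prod volume).withDensity fun z => ENNReal.ofReal (a z)
  kernel_eq : ∀ᵐ x ∂μ.fst, κ x = volume.withDensity fun t => ENNReal.ofReal (a (x, t))
  eq_compProd : μ = μ.fst ⊗ₘ κ
  ae_eq_mul : ∀ᵐ z ∂μ, f z = f' z.1 * a z

theorem exists_isConditionalDensity [SigmaFinite m]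
    (h : HasFiniteEntropy (m.prod volume) μ f) :
    ∃ f' a κ, IsConditionalDensity m μ f f' a κ := by
  have := h.isProbabilityMeasure
  have hfm := h.measurable
  have hfo : Measurable fun z => ENNReal.ofReal (f z) := by fun_prop
  set fl : E → ℝ≥0∞ := fun x => ∫⁻ t, ENNReal.ofReal (f (x, t)) with hfl
  have hflm : Measurable fl := hfo.lintegral_prod_right'
  have hfst : μ.fst = m.withDensity fl := by
    ext s hs
    rw [Measure.fst_apply hs, h.eq_withDensity, withDensity_apply _ (measurable_fst hs),
      withDensity_apply _ hs, ← prod_univ, setLIntegral_prod _ hfo.aemeasurable]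
    simp [hfl]
  have htop : ∀ᵐ x ∂m, fl x < ∞ := by
    refine ae_lt_top hflm ?_
    have h1 : μ.fst univ = 1 := measure_univ
    rw [hfst, withDensity_apply _ MeasurableSet.univ, setLIntegral_univ] at h1
    simp [h1]
  set f' : E → ℝ := fun x => (fl x).toReal with hf'
  have hf'm : Measurable f' := hflm.ennreal_toReal
  have hf'0 : ∀ x, 0 ≤ f' x := fun x => ENNReal.toReal_nonneg
  have hfst' : μ.fst = m.withDensity fun x => ENNReal.ofReal (f' x) := by
    rw [hfst]
    refine withDensity_congr_ae ?_
    filter_upwards [htop] with x hx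
    exact (ENNReal.ofReal_toReal hx.ne).symm
  set a : E × ℝ → ℝ := fun z => f z / f' z.1 with ha
  have ham : Measurable a := by fun_prop
  have ha0 : ∀ z, 0 ≤ a z := fun z => div_nonneg (h.nonneg z) (hf'0 _)
  have hmul : ∀ᵐ z ∂m.prod (volume : Measure ℝ), f z = f' z.1 * a z := by
    rw [Measure.ae_prod_iff_ae_ae (measurableSet_eq_fun hfm (by fun_prop))]
    filter_upwards [htop] with x hx
    rcases eq_or_ne (f' x) 0 with h0 | h0
    · have hz : fl x = 0 := ((ENNReal.toReal_eq_zero_iff _).1 h0).resolve_right hx.ne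
      rw [hfl, lintegral_eq_zero_iff (by fun_prop)] at hz
      filter_upwards [hz] with t ht
      simp only [Pi.zero_apply, ENNReal.ofReal_eq_zero] at ht
      simp [h0, le_antisymm ht (h.nonneg _)]
    · refine ae_of_all _ fun t => ?_
      simp only [ha]
      field_simp
  have hdens : μ = (μ.fst.prod volume).withDensity fun z => ENNReal.ofReal (a z) := by
    have h1 : μ.fst.prod (volume : Measure ℝ) =
        (m.prod volume).withDensity fun z => ENNReal.ofReal (f' z.1) := by
      rw [hfst', prod_withDensity_left (by fun_prop)]
    rw [h1, ← withDensity_mul _ (by fun_prop) (by fun_prop)]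
    conv_lhs => rw [h.eq_withDensity]
    refine withDensity_congr_ae ?_
    filter_upwards [hmul] with z hz
    rw [Pi.mul_apply, ← ENNReal.ofReal_mul (hf'0 _), ← hz]
  have hG : MeasurableSet {x | 0 < f' x} := measurableSet_lt measurable_const hf'm
  classical
  let η : Kernel E ℝ := Kernel.withDensity (Kernel.const E volume)
    fun x t => ENNReal.ofReal (a (x, t))
  have hηapp : ∀ x, η x = volume.withDensity fun t => ENNReal.ofReal (a (x, t)) := fun x => by
    simp only [η]
    rw [Kernel.withDensity_apply _ (by unfold Function.uncurry; fun_prop), Kernel.const_apply]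
  let κ : Kernel E ℝ := Kernel.piecewise hG η (Kernel.const E (Measure.dirac 0))
  have hκ : ∀ x, 0 < f' x → κ x = volume.withDensity fun t => ENNReal.ofReal (a (x, t)) := by
    intro x hx
    rw [← hηapp, Kernel.piecewise_apply,
      if_pos (show x ∈ {x | 0 < f' x} from hx)]
  have hmarkov : IsMarkovKernel κ := by
    refine ⟨fun x => ?_⟩
    by_cases hx : 0 < f' x
    · refine ⟨?_⟩
      have hne : fl x ≠ ∞ := fun ht => by simp [hf', ht] at hx
      rw [hκ x hx, withDensity_apply _ MeasurableSet.univ, setLIntegral_univ]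
      simp only [ha, div_eq_mul_inv, ENNReal.ofReal_mul (h.nonneg _)]
      rw [lintegral_mul_const _ (by fun_prop), ENNReal.ofReal_inv_of_pos hx]
      simp only [hf']
      rw [ENNReal.ofReal_toReal hne]
      refine ENNReal.mul_inv_cancel (fun h0 => ?_) hne
      change fl x = 0 at h0
      simp [hf', h0] at hx
    · rw [Kernel.piecewise_apply, if_neg (by simpa using hx), Kernel.const_apply]
      infer_instance
  have hkeq : ∀ᵐ x ∂μ.fst, κ x = volume.withDensity fun t => ENNReal.ofReal (a (x, t)) := by
    filter_upwards [ae_pos_of_eq_withDensity hf'm hfst'] with x hx using hκ x hx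
  refine ⟨f', a, κ, hf'm, hf'0, ham, ha0, hmarkov, hfst', hdens, hkeq, ?_, ?_⟩
  · ext s hs
    rw [Measure.compProd_apply hs]
    conv_lhs => rw [hdens]
    rw [withDensity_apply _ hs, ← lintegral_indicator hs,
      lintegral_prod _ (Measurable.aemeasurable (by
        exact (Measurable.indicator (by fun_prop) hs)))]
    refine lintegral_congr_ae ?_
    filter_upwards [hkeq] with x hx
    rw [hx, withDensity_apply _ (measurable_prodMk_left hs),
      ← lintegral_indicator (measurable_prodMk_left hs)]
    rfl
  · have hac : μ ≪ m.prod volume := by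
      rw [h.eq_withDensity]; exact withDensity_absolutelyContinuous _ _
    exact hac.ae_le hmul

theorem map_quantile_compProd {F : Type*} [MeasurableSpace F] (ρ : Measure F) [SFinite ρ]
    {p : F → E} (hp : Measurable p) (κ : Kernel E ℝ) [IsMarkovKernel κ] :
    (ρ.prod (volume.restrict (Ioo (0 : ℝ) 1))).map
      (fun z => (p z.1, quantile (κ (p z.1)) z.2)) = ρ.map p ⊗ₘ κ := by
  have hm : Measurable fun z : F × ℝ => (p z.1, quantile (κ (p z.1)) z.2) :=
    (hp.comp measurable_fst).prodMk
      ((measurable_quantile_kernel κ).comp (hp.prodMap measurable_id))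
  ext s hs
  rw [Measure.map_apply hm hs, Measure.prod_apply (hm hs), Measure.compProd_apply hs,
    lintegral_map (Kernel.measurable_kernel_prodMk_left hs) hp]
  refine lintegral_congr fun x => ?_
  conv_rhs => rw [← map_quantile (κ (p x))]
  rw [Measure.map_apply (measurable_quantile _) (measurable_prodMk_left hs)]
  rfl

end Disintegration

section Coupling

variable {E : Type*} [MeasurableSpace E] {μ ν : Measure E} {π : Measure (E × E)}

theorem IsCoupling.integrable_comp_fst (h : IsCoupling π μ ν) {F : Type*} [NormedAddCommGroup F]
    {g : E → F} (hg : Integrable g μ) : Integrable (fun p : E × E => g p.1) π := by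
  rw [← h.1] at hg
  exact hg.comp_measurable measurable_fst

theorem IsCoupling.integrable_comp_snd (h : IsCoupling π μ ν) {F : Type*} [NormedAddCommGroup F]
    {g : E → F} (hg : Integrable g ν) : Integrable (fun p : E × E => g p.2) π := by
  rw [← h.2] at hg
  exact hg.comp_measurable measurable_snd

theorem IsCoupling.integral_comp_fst (h : IsCoupling π μ ν) {F : Type*} [NormedAddCommGroup F]
    [NormedSpace ℝ F] {g : E → F} (hg : Integrable g μ) :
    ∫ p : E × E, g p.1 ∂π = ∫ x, g x ∂μ := by
  have hg' := hg.aestronglyMeasurable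
  rw [← h.1] at hg' ⊢
  exact (integral_map measurable_fst.aemeasurable hg').symm

theorem IsCoupling.integral_comp_snd (h : IsCoupling π μ ν) {F : Type*} [NormedAddCommGroup F]
    [NormedSpace ℝ F] {g : E → F} (hg : Integrable g ν) :
    ∫ p : E × E, g p.2 ∂π = ∫ x, g x ∂ν := by
  have hg' := hg.aestronglyMeasurable
  rw [← h.2] at hg' ⊢
  exact (integral_map measurable_snd.aemeasurable hg').symm

theorem IsCoupling.isProbabilityMeasure (h : IsCoupling π μ ν) [hμ : IsProbabilityMeasure μ] :
    IsProbabilityMeasure π := by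
  refine ⟨?_⟩
  have := hμ.measure_univ
  rwa [← h.1, Measure.map_apply measurable_fst MeasurableSet.univ, preimage_univ] at this

theorem IsCoupling.integrable_inner [NormedAddCommGroup E] [InnerProductSpace ℝ E]
    [BorelSpace E] [SecondCountableTopology E] (h : IsCoupling π μ ν)
    (hμ : Integrable (fun x => ‖x‖ ^ 2) μ) (hν : Integrable (fun x => ‖x‖ ^ 2) ν) :
    Integrable (fun p : E × E => ⟪p.1, p.2⟫) π := by
  refine Integrable.mono' ((h.integrable_comp_fst hμ).add (h.integrable_comp_snd hν))
    (Continuous.aestronglyMeasurable (by fun_prop)) (ae_of_all _ fun p => ?_)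
  have h1 := norm_inner_le_norm (𝕜 := ℝ) p.1 p.2
  simp only [Pi.add_apply]
  nlinarith [sq_nonneg (‖p.1‖ - ‖p.2‖), sq_nonneg ‖p.1‖, sq_nonneg ‖p.2‖]

end Coupling

theorem integrable_exp_neg_norm_sq_div_two (E : Type*) [NormedAddCommGroup E]
    [InnerProductSpace ℝ E] [FiniteDimensional ℝ E] [MeasurableSpace E] [BorelSpace E] :
    Integrable fun x : E => Real.exp (-‖x‖ ^ 2 / 2) := by
  have h := (GaussianFourier.integrable_cexp_neg_mul_sq_norm_add (V := E) (b := 1 / 2)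
    (by norm_num) 0 0).norm
  refine h.congr (ae_of_all _ fun x => ?_)
  simp only [Complex.norm_exp]
  congr 1
  simp [← Complex.ofReal_pow]
  ring

section Marginal

variable {E : Type*} [NormedAddCommGroup E] [InnerProductSpace ℝ E] [FiniteDimensional ℝ E]
  [MeasurableSpace E] [BorelSpace E] {μ : Measure (E × ℝ)} {f : E × ℝ → ℝ} {f' : E → ℝ}
  {a : E × ℝ → ℝ} {κ : Kernel E ℝ}

theorem IsConditionalDensity.ae_log_eq (hc : IsConditionalDensity volume μ f f' a κ) :
    ∀ᵐ z ∂μ, Real.log (f z) = Real.log (f' z.1) + Real.log (a z) := by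
  have h1 : ∀ᵐ z ∂μ, 0 < f' z.1 :=
    ae_of_ae_map measurable_fst.aemeasurable
      (ae_pos_of_eq_withDensity hc.measurable_marginal hc.fst_eq)
  filter_upwards [hc.ae_eq_mul, h1,
    ae_pos_of_eq_withDensity hc.measurable_cond hc.eq_withDensity] with z hz hz1 hz2
  rw [hz, Real.log_mul hz1.ne' hz2.ne']

theorem IsConditionalDensity.hasFiniteEntropy_fst
    (h : HasFiniteEntropy (volume.prod volume) μ f)
    (hc : IsConditionalDensity volume μ f f' a κ)
    (h1 : Integrable (fun z => ‖z.1‖ ^ 2) μ) (h2 : Integrable (fun z => z.2 ^ 2) μ) :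
    HasFiniteEntropy volume μ.fst f' := by
  have := h.isProbabilityMeasure
  refine ⟨hc.measurable_marginal, hc.marginal_nonneg, hc.fst_eq, inferInstance, ?_⟩
  have hexp : Integrable (fun z : E × ℝ => Real.exp (-z.2 ^ 2 / 2)) (μ.fst.prod volume) := by
    have := integrable_exp_neg_norm_sq_div_two ℝ
    simp only [Real.norm_eq_abs, sq_abs] at this
    exact this.comp_snd μ.fst
  have hnega := integrable_negPart_log hc.measurable_cond hc.cond_nonneg hc.eq_withDensity
    (w := fun z => z.2 ^ 2) (fun z => sq_nonneg _) h2 hexp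
  have h1' : Integrable (fun x => ‖x‖ ^ 2) μ.fst :=
    (integrable_map_measure (Continuous.aestronglyMeasurable (by fun_prop))
      measurable_fst.aemeasurable).2 h1
  have hnegf := integrable_negPart_log hc.measurable_marginal hc.marginal_nonneg hc.fst_eq
    (w := fun x => ‖x‖ ^ 2) (fun z => sq_nonneg _) h1' (integrable_exp_neg_norm_sq_div_two E)
  have hlogm : Measurable fun x => Real.log (f' x) := hc.measurable_marginal.log
  refine (integrable_map_measure hlogm.aestronglyMeasurable measurable_fst.aemeasurable).2 ?_
  refine integrable_of_negPart_of_le (hlogm.comp measurable_fst).aestronglyMeasurable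
    (hnegf.comp_measurable measurable_fst) (h.integrable_log.add hnega) ?_
  filter_upwards [hc.ae_log_eq] with z hz
  simp only [Function.comp_apply, Pi.add_apply]
  have := le_max_left (-Real.log (a z)) 0
  linarith

theorem IsConditionalDensity.integrable_log_cond
    (h : HasFiniteEntropy (volume.prod volume) μ f)
    (hc : IsConditionalDensity volume μ f f' a κ) (hfst : HasFiniteEntropy volume μ.fst f') :
    Integrable (fun z => Real.log (a z)) μ := by
  refine (h.integrable_log.sub (hfst.integrable_log.comp_measurable measurable_fst)).congr ?_
  filter_upwards [hc.ae_log_eq] with z hz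
  simp [hz]

theorem IsConditionalDensity.integral_log_eq
    (h : HasFiniteEntropy (volume.prod volume) μ f)
    (hc : IsConditionalDensity volume μ f f' a κ) (hfst : HasFiniteEntropy volume μ.fst f') :
    ∫ z, Real.log (f z) ∂μ = ∫ x, Real.log (f' x) ∂μ.fst + ∫ z, Real.log (a z) ∂μ := by
  have hfst' : Integrable (fun z : E × ℝ => Real.log (f' z.1)) μ :=
    hfst.integrable_log.comp_measurable measurable_fst
  rw [integral_congr_ae hc.ae_log_eq, integral_add hfst' (hc.integrable_log_cond h hfst)]
  congr 1
  exact (integral_map measurable_fst.aemeasurable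
    hc.measurable_marginal.log.aestronglyMeasurable).symm

theorem IsConditionalDensity.ae_kernel_Iic (hc : IsConditionalDensity volume μ f f' a κ)
    [IsProbabilityMeasure μ] (hpos : ∀ᵐ z ∂μ, 0 < z.2) : ∀ᵐ x ∂μ.fst, κ x (Iic 0) = 0 := by
  have := hc.isMarkovKernel
  rw [hc.eq_compProd] at hpos
  filter_upwards [Measure.ae_ae_of_ae_compProd hpos] with x hx
  rw [ae_iff] at hx
  simpa [Iic_def] using hx

end Marginal

section HalfSpace

variable {E : Type*} [NormedAddCommGroup E] [InnerProductSpace ℝ E] [FiniteDimensional ℝ E]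
  [MeasurableSpace E] [BorelSpace E]

/-- For centered `μ`, the sum of the differential entropies of `μ` and `ν` is at most `c` plus
the correlation of some coupling. -/
def EntropyCorrelationBound (E : Type*) [NormedAddCommGroup E] [InnerProductSpace ℝ E]
    [FiniteDimensional ℝ E] [MeasurableSpace E] [BorelSpace E] (c : ℝ) : Prop :=
  ∀ (μ ν : Measure E) (f g : E → ℝ), HasFiniteEntropy volume μ f → HasFiniteEntropy volume ν g →
    Integrable (fun x => ‖x‖ ^ 2) μ → Integrable (fun x => ‖x‖ ^ 2) ν → ∫ x, x ∂μ = 0 →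
    ∃ π, IsCoupling π μ ν ∧
      -∫ x, Real.log (f x) ∂μ - ∫ x, Real.log (g x) ∂ν ≤ c + ∫ p, ⟪p.1, p.2⟫ ∂π

theorem exists_coupling_of_pos {c : ℝ} (hE : EntropyCorrelationBound E c)
    {μ ν : Measure (E × ℝ)} {f g : E × ℝ → ℝ}
    (hμ : HasFiniteEntropy (volume.prod volume) μ f)
    (hν : HasFiniteEntropy (volume.prod volume) ν g)
    (hμ1 : Integrable (fun z => ‖z.1‖ ^ 2) μ) (hμ2 : Integrable (fun z => z.2 ^ 2) μ)
    (hν1 : Integrable (fun z => ‖z.1‖ ^ 2) ν) (hν2 : Integrable (fun z => z.2 ^ 2) ν)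
    (hμpos : ∀ᵐ z ∂μ, 0 < z.2) (hνpos : ∀ᵐ z ∂ν, 0 < z.2) (hcent : ∫ z, z.1 ∂μ = 0) :
    ∃ π, IsCoupling π μ ν ∧ -∫ z, Real.log (f z) ∂μ - ∫ z, Real.log (g z) ∂ν ≤
      c + Real.log (Real.pi / 2) + ∫ p, (⟪p.1.1, p.2.1⟫ + p.1.2 * p.2.2) ∂π := by
  have := hμ.isProbabilityMeasure
  have := hν.isProbabilityMeasure
  have := isProbabilityMeasure_volume_Ioo
  obtain ⟨f', a, κ, hcμ⟩ := exists_isConditionalDensity hμ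
  obtain ⟨g', b, η, hcν⟩ := exists_isConditionalDensity hν
  have := hcμ.isMarkovKernel
  have := hcν.isMarkovKernel
  have hμ' := hcμ.hasFiniteEntropy_fst hμ hμ1 hμ2
  have hν' := hcν.hasFiniteEntropy_fst hν hν1 hν2
  have hsq : ∀ {ρ : Measure (E × ℝ)}, Integrable (fun z => ‖z.1‖ ^ 2) ρ →
      Integrable (fun x => ‖x‖ ^ 2) ρ.fst := fun h =>
    (integrable_map_measure (Continuous.aestronglyMeasurable (by fun_prop))
      measurable_fst.aemeasurable).2 h
  have hcent' : ∫ x, x ∂μ.fst = 0 := by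
    rw [Measure.fst, integral_map measurable_fst.aemeasurable
      (Continuous.aestronglyMeasurable (by fun_prop)), hcent]
  obtain ⟨π', hπ', hle⟩ := hE _ _ _ _ hμ' hν' (hsq hμ1) (hsq hν1) hcent'
  have := hπ'.isProbabilityMeasure
  set U : Measure ℝ := volume.restrict (Ioo 0 1) with hU
  let X : (E × E) × ℝ → E × ℝ := fun p => (p.1.1, quantile (κ p.1.1) p.2)
  let Y : (E × E) × ℝ → E × ℝ := fun p => (p.1.2, quantile (η p.1.2) p.2)
  have hX : Measurable X := (measurable_fst.comp measurable_fst).prodMk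
    ((measurable_quantile_kernel κ).comp (measurable_fst.prodMap measurable_id))
  have hY : Measurable Y := (measurable_snd.comp measurable_fst).prodMk
    ((measurable_quantile_kernel η).comp (measurable_snd.prodMap measurable_id))
  have hXmap : (π'.prod U).map X = μ := by
    rw [map_quantile_compProd π' measurable_fst κ, hπ'.1, ← hcμ.eq_compProd]
  have hYmap : (π'.prod U).map Y = ν := by
    rw [map_quantile_compProd π' measurable_snd η, hπ'.2, ← hcν.eq_compProd]
  have hXint : ∀ {k : E × ℝ → ℝ}, Integrable k μ → Integrable (fun p => k (X p)) (π'.prod U) :=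
    fun hk => by rw [← hXmap] at hk; exact hk.comp_measurable hX
  have hYint : ∀ {k : E × ℝ → ℝ}, Integrable k ν → Integrable (fun p => k (Y p)) (π'.prod U) :=
    fun hk => by rw [← hYmap] at hk; exact hk.comp_measurable hY
  have hIa := hXint (hcμ.integrable_log_cond hμ hμ')
  have hIb := hYint (hcν.integrable_log_cond hν hν')
  have hIab : Integrable (fun p => Real.log (a (X p)) + Real.log (b (Y p))) (π'.prod U) :=
    hIa.add hIb
  have hIm : Integrable (fun p => (X p).2 * (Y p).2) (π'.prod U) := by
    refine Integrable.mono' ((hXint hμ2).add (hYint hν2))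
      (Measurable.aestronglyMeasurable (by fun_prop)) (ae_of_all _ fun p => ?_)
    simp only [Pi.add_apply, Real.norm_eq_abs, abs_mul]
    nlinarith [sq_nonneg (|(X p).2| - |(Y p).2|), sq_abs (X p).2, sq_abs (Y p).2,
      sq_nonneg (X p).2, sq_nonneg (Y p).2]
  have hIi : Integrable (fun p : (E × E) × ℝ => ⟪p.1.1, p.1.2⟫) (π'.prod U) :=
    (hπ'.integrable_inner (hsq hμ1) (hsq hν1)).comp_fst U
  have hfiber : ∀ᵐ q ∂π', -∫ u, (Real.log (a (X (q, u))) + Real.log (b (Y (q, u)))) ∂U ≤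
      Real.log (Real.pi / 2) + ∫ u, (X (q, u)).2 * (Y (q, u)).2 ∂U := by
    have e1 := hcμ.kernel_eq
    have e2 := hcν.kernel_eq
    have e3 := hcμ.ae_kernel_Iic hμpos
    have e4 := hcν.ae_kernel_Iic hνpos
    rw [← hπ'.1] at e1 e3
    rw [← hπ'.2] at e2 e4
    filter_upwards [ae_of_ae_map measurable_fst.aemeasurable e1,
      ae_of_ae_map measurable_snd.aemeasurable e2, ae_of_ae_map measurable_fst.aemeasurable e3,
      ae_of_ae_map measurable_snd.aemeasurable e4, hIab.prod_right_ae, hIm.prod_right_ae]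
      with q h1 h2 h3 h4 h5 h6
    have ham := hcμ.measurable_cond
    have hbm := hcν.measurable_cond
    have h5' : Integrable (fun u => Real.log (a (q.1, quantile (κ q.1) u)) +
      Real.log (b (q.2, quantile (η q.2) u))) U := h5
    have h6' : Integrable (fun u => quantile (κ q.1) u * quantile (η q.2) u) U := h6
    have ham' : Measurable fun t => a (q.1, t) := ham.comp measurable_prodMk_left
    have hbm' : Measurable fun t => b (q.2, t) := hbm.comp measurable_prodMk_left
    exact integral_log_density_quantile_le (α := κ q.1) (β := η q.2)
      ham' (fun t => hcμ.cond_nonneg _) hbm' (fun t => hcν.cond_nonneg _)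
      h1 h2 h3 h4 h5' h6'
  have hsum : -∫ p, (Real.log (a (X p)) + Real.log (b (Y p))) ∂(π'.prod U) ≤
      Real.log (Real.pi / 2) + ∫ p, (X p).2 * (Y p).2 ∂(π'.prod U) := by
    rw [integral_prod _ hIab, integral_prod _ hIm, ← integral_neg]
    have h1 := integral_mono_ae hIab.integral_prod_left.neg
      ((integrable_const (Real.log (Real.pi / 2))).add hIm.integral_prod_left) hfiber
    refine h1.trans_eq ?_
    have h2 := integral_add (μ := π') (integrable_const (Real.log (Real.pi / 2)))
      hIm.integral_prod_left
    simp only [integral_const, probReal_univ, one_smul] at h2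
    exact h2
  refine ⟨(π'.prod U).map fun p => (X p, Y p), ⟨?_, ?_⟩, ?_⟩
  · rw [Measure.map_map measurable_fst (hX.prodMk hY)]; exact hXmap
  · rw [Measure.map_map measurable_snd (hX.prodMk hY)]; exact hYmap
  have hpair : ∫ p, (⟪p.1.1, p.2.1⟫ + p.1.2 * p.2.2) ∂((π'.prod U).map fun p => (X p, Y p)) =
      ∫ q, ⟪q.1, q.2⟫ ∂π' + ∫ p, (X p).2 * (Y p).2 ∂(π'.prod U) := by
    rw [integral_map (hX.prodMk hY).aemeasurable
      (Continuous.aestronglyMeasurable (by fun_prop)), integral_add hIi hIm]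
    congr 1
    rw [integral_fun_fst (fun q : E × E => ⟪q.1, q.2⟫)]
    simp
  have hla : ∫ z, Real.log (a z) ∂μ = ∫ p, Real.log (a (X p)) ∂(π'.prod U) := by
    rw [← integral_map (f := fun z => Real.log (a z)) hX.aemeasurable
      hcμ.measurable_cond.log.aestronglyMeasurable, hXmap]
  have hlb : ∫ z, Real.log (b z) ∂ν = ∫ p, Real.log (b (Y p)) ∂(π'.prod U) := by
    rw [← integral_map (f := fun z => Real.log (b z)) hY.aemeasurable
      hcν.measurable_cond.log.aestronglyMeasurable, hYmap]
  rw [hpair, hcμ.integral_log_eq hμ hμ', hcν.integral_log_eq hν hν', hla, hlb]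
  rw [integral_add hIa hIb] at hsum
  linarith

end HalfSpace

theorem IsCoupling.map_symm {Ω Ω' : Type*} [MeasurableSpace Ω] [MeasurableSpace Ω']
    {μ ν : Measure Ω} {e e' : Ω ≃ᵐ Ω'} {π : Measure (Ω' × Ω')}
    (h : IsCoupling π (μ.map e) (ν.map e')) :
    IsCoupling (π.map (e.symm.prodCongr e'.symm)) μ ν := by
  constructor
  · have h1 := congrArg (Measure.map e.symm) h.1
    rw [Measure.map_map e.symm.measurable e.measurable,
      Measure.map_map e.symm.measurable measurable_fst] at h1
    rw [Measure.map_map measurable_fst (MeasurableEquiv.measurable _)]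
    simp only [MeasurableEquiv.symm_comp_self, Measure.map_id] at h1
    exact h1
  · have h1 := congrArg (Measure.map e'.symm) h.2
    rw [Measure.map_map e'.symm.measurable e'.measurable,
      Measure.map_map e'.symm.measurable measurable_snd] at h1
    rw [Measure.map_map measurable_snd (MeasurableEquiv.measurable _)]
    simp only [MeasurableEquiv.symm_comp_self, Measure.map_id] at h1
    exact h1

section Glue

variable {E : Type*} [NormedAddCommGroup E] [InnerProductSpace ℝ E] [FiniteDimensional ℝ E]
  [MeasurableSpace E] [BorelSpace E] {c : ℝ} {μ ν : Measure (E × ℝ)} {f g : E × ℝ → ℝ}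

theorem IsCoupling.integrable_inner_add_mul {π : Measure ((E × ℝ) × (E × ℝ))}
    (h : IsCoupling π μ ν)
    (hμ1 : Integrable (fun z => ‖z.1‖ ^ 2) μ) (hμ2 : Integrable (fun z => z.2 ^ 2) μ)
    (hν1 : Integrable (fun z => ‖z.1‖ ^ 2) ν) (hν2 : Integrable (fun z => z.2 ^ 2) ν) :
    Integrable (fun p : (E × ℝ) × (E × ℝ) => ⟪p.1.1, p.2.1⟫ + p.1.2 * p.2.2) π := by
  refine Integrable.mono' (((h.integrable_comp_fst hμ1).add (h.integrable_comp_snd hν1)).add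
    ((h.integrable_comp_fst hμ2).add (h.integrable_comp_snd hν2)))
    (Continuous.aestronglyMeasurable (by fun_prop)) (ae_of_all _ fun p => ?_)
  have h1 := abs_real_inner_le_norm p.1.1 p.2.1
  have h2 := abs_add_le ⟪p.1.1, p.2.1⟫ (p.1.2 * p.2.2)
  rw [abs_mul] at h2
  simp only [Pi.add_apply, Real.norm_eq_abs]
  nlinarith [sq_nonneg (‖p.1.1‖ - ‖p.2.1‖), sq_nonneg ‖p.1.1‖, sq_nonneg ‖p.2.1‖,
    sq_nonneg (|p.1.2| - |p.2.2|), sq_abs p.1.2, sq_abs p.2.2, sq_nonneg p.1.2,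
    sq_nonneg p.2.2]

theorem exists_coupling_of_neg (hE : EntropyCorrelationBound E c)
    (hμ : HasFiniteEntropy (volume.prod volume) μ f)
    (hν : HasFiniteEntropy (volume.prod volume) ν g)
    (hμ1 : Integrable (fun z => ‖z.1‖ ^ 2) μ) (hμ2 : Integrable (fun z => z.2 ^ 2) μ)
    (hν1 : Integrable (fun z => ‖z.1‖ ^ 2) ν) (hν2 : Integrable (fun z => z.2 ^ 2) ν)
    (hμneg : ∀ᵐ z ∂μ, z.2 < 0) (hνneg : ∀ᵐ z ∂ν, z.2 < 0) (hcent : ∫ z, z.1 ∂μ = 0) :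
    ∃ π, IsCoupling π μ ν ∧ -∫ z, Real.log (f z) ∂μ - ∫ z, Real.log (g z) ∂ν ≤
      c + Real.log (Real.pi / 2) + ∫ p, (⟪p.1.1, p.2.1⟫ + p.1.2 * p.2.2) ∂π := by
  let e : E × ℝ ≃ᵐ E × ℝ := (MeasurableEquiv.refl E).prodCongr (MeasurableEquiv.neg ℝ)
  have he : MeasurePreserving e (volume.prod volume) (volume.prod volume) :=
    (MeasurePreserving.id (volume : Measure E)).prod (Measure.measurePreserving_neg volume)
  have hinteg : ∀ {ρ : Measure (E × ℝ)} {k : E × ℝ → ℝ}, Integrable (k ∘ e) ρ →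
    Integrable k (ρ.map e) := fun h => (integrable_map_equiv e _).2 h
  have hae : ∀ {ρ : Measure (E × ℝ)}, (∀ᵐ z ∂ρ, z.2 < 0) → ∀ᵐ z ∂ρ.map e, 0 < z.2 := by
    intro ρ h
    rw [ae_map_iff e.measurable.aemeasurable (measurableSet_lt measurable_const measurable_snd)]
    filter_upwards [h] with z hz
    exact neg_pos.2 hz
  obtain ⟨π, hπ, hle⟩ := exists_coupling_of_pos hE (hμ.map e he) (hν.map e he)
    (hinteg hμ1) (hinteg (hμ2.congr (ae_of_all _ fun z => (neg_sq z.2).symm)))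
    (hinteg hν1) (hinteg (hν2.congr (ae_of_all _ fun z => (neg_sq z.2).symm))) (hae hμneg) (hae hνneg)
    ((integral_map_equiv e _).trans hcent)
  refine ⟨_, hπ.map_symm, ?_⟩
  rw [integral_log_comp_symm, integral_log_comp_symm] at hle
  rw [integral_map_equiv]
  simpa [e, MeasurableEquiv.prodCongr, MeasurableEquiv.neg] using hle

theorem smul_cond_add_smul_cond {Ω : Type*} [MeasurableSpace Ω] {μ : Measure Ω}
    [IsFiniteMeasure μ] {s t : Set Ω} (ht : MeasurableSet t) (hst : Disjoint s t)
    (hs0 : μ s ≠ 0) (ht0 : μ t ≠ 0) (hst' : ∀ᵐ x ∂μ, x ∈ s ∪ t) :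
    μ s • μ[|s] + μ t • μ[|t] = μ := by
  rw [ProbabilityTheory.cond, ProbabilityTheory.cond, smul_smul, smul_smul,
    ENNReal.mul_inv_cancel hs0 (measure_ne_top _ _), ENNReal.mul_inv_cancel ht0
    (measure_ne_top _ _), one_smul, one_smul, ← Measure.restrict_union hst ht]
  exact Measure.restrict_eq_self_of_ae_mem hst'

theorem exists_coupling_of_halfSpaces (hE : EntropyCorrelationBound E c)
    (hμ : HasFiniteEntropy (volume.prod volume) μ f)
    (hν : HasFiniteEntropy (volume.prod volume) ν g)
    (hμ1 : Integrable (fun z => ‖z.1‖ ^ 2) μ) (hμ2 : Integrable (fun z => z.2 ^ 2) μ)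
    (hν1 : Integrable (fun z => ‖z.1‖ ^ 2) ν) (hν2 : Integrable (fun z => z.2 ^ 2) ν)
    (hμν : μ.real {z | 0 < z.2} = ν.real {z | 0 < z.2})
    (hpos : 0 < μ.real {z | 0 < z.2}) (hlt : μ.real {z | 0 < z.2} < 1)
    (hcpos : ∫ z in {z | 0 < z.2}, z.1 ∂μ = 0) (hcneg : ∫ z in {z | z.2 < 0}, z.1 ∂μ = 0) :
    ∃ π, IsCoupling π μ ν ∧ -∫ z, Real.log (f z) ∂μ - ∫ z, Real.log (g z) ∂ν ≤
      c + Real.log (2 * Real.pi) + ∫ p, (⟪p.1.1, p.2.1⟫ + p.1.2 * p.2.2) ∂π := by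
  have := hμ.isProbabilityMeasure
  have := hν.isProbabilityMeasure
  set s : Set (E × ℝ) := {z | 0 < z.2} with hs_def
  set t : Set (E × ℝ) := {z | z.2 < 0} with ht_def
  have hs : MeasurableSet s := measurableSet_lt measurable_const measurable_snd
  have ht : MeasurableSet t := measurableSet_lt measurable_snd measurable_const
  have hst : Disjoint s t := disjoint_left.2 fun z (h : 0 < z.2) (h' : z.2 < 0) =>
    lt_asymm h h'
  have hne : ∀ᵐ z : E × ℝ ∂(volume.prod volume), z ∈ s ∪ t := by
    have h0 : ∀ᵐ r : ℝ, r ≠ 0 := by simp [ae_iff]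
    filter_upwards [Measure.quasiMeasurePreserving_snd.ae h0] with z hz
    exact (lt_or_gt_of_ne hz).symm
  have hae : ∀ {ρ : Measure (E × ℝ)} {k : E × ℝ → ℝ},
      HasFiniteEntropy (volume.prod volume) ρ k → ∀ᵐ z ∂ρ, z ∈ s ∪ t := fun h => by
    rw [h.eq_withDensity]
    exact (withDensity_absolutelyContinuous _ _).ae_le hne
  have hsum : ∀ {ρ : Measure (E × ℝ)} {k : E × ℝ → ℝ},
      HasFiniteEntropy (volume.prod volume) ρ k → ρ.real t = 1 - ρ.real s := fun {ρ} {k} h => by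
    have := h.isProbabilityMeasure
    have h1 : ρ.real (s ∪ t) = 1 := by
      rw [measureReal_def, (mem_ae_iff_prob_eq_one (hs.union ht)).1 (hae h)]; simp
    rw [measureReal_union hst ht] at h1
    linarith
  have hμt : μ.real t = 1 - μ.real s := hsum hμ
  have hνt : ν.real t = 1 - μ.real s := by rw [hsum hν, hμν]
  have hs0 : ∀ {ρ : Measure (E × ℝ)} {k : Set (E × ℝ)}, 0 < ρ.real k → ρ k ≠ 0 :=
    fun h h0 => by simp [measureReal_def, h0] at h
  have hμs0 := hs0 hpos
  have hμt0 : μ t ≠ 0 := hs0 (by linarith)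
  have hνs0 : ν s ≠ 0 := hs0 (by linarith)
  have hνt0 : ν t ≠ 0 := hs0 (by linarith)
  have hνs : ν s = μ s := ((measureReal_eq_measureReal_iff).1 hμν).symm
  have hνt' : ν t = μ t := (measureReal_eq_measureReal_iff).1 (hνt.trans hμt.symm)
  obtain ⟨π₁, hπ₁, hle₁⟩ := exists_coupling_of_pos hE (hμ.cond hs hpos.ne')
    (hν.cond hs (hμν ▸ hpos.ne')) (integrable_cond_of_integrable hμ1 hμs0)
    (integrable_cond_of_integrable hμ2 hμs0) (integrable_cond_of_integrable hν1 hνs0)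
    (integrable_cond_of_integrable hν2 hνs0) (ae_cond_mem hs) (ae_cond_mem hs)
    (by rw [integral_cond_eq, hcpos, smul_zero])
  obtain ⟨π₂, hπ₂, hle₂⟩ := exists_coupling_of_neg hE (hμ.cond ht (by linarith))
    (hν.cond ht (by linarith)) (integrable_cond_of_integrable hμ1 hμt0)
    (integrable_cond_of_integrable hμ2 hμt0) (integrable_cond_of_integrable hν1 hνt0)
    (integrable_cond_of_integrable hν2 hνt0) (ae_cond_mem ht) (ae_cond_mem ht)
    (by rw [integral_cond_eq, hcneg, smul_zero])
  have hI₁ := hπ₁.integrable_inner_add_mul (integrable_cond_of_integrable hμ1 hμs0)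
    (integrable_cond_of_integrable hμ2 hμs0) (integrable_cond_of_integrable hν1 hνs0)
    (integrable_cond_of_integrable hν2 hνs0)
  have hI₂ := hπ₂.integrable_inner_add_mul (integrable_cond_of_integrable hμ1 hμt0)
    (integrable_cond_of_integrable hμ2 hμt0) (integrable_cond_of_integrable hν1 hνt0)
    (integrable_cond_of_integrable hν2 hνt0)
  refine ⟨μ s • π₁ + μ t • π₂, ⟨?_, ?_⟩, ?_⟩
  · rw [Measure.map_add _ _ measurable_fst, Measure.map_smul, Measure.map_smul, hπ₁.1, hπ₂.1]
    exact smul_cond_add_smul_cond ht hst hμs0 hμt0 (hae hμ)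
  · rw [Measure.map_add _ _ measurable_snd, Measure.map_smul, Measure.map_smul, hπ₁.2, hπ₂.2,
      ← hνs, ← hνt']
    exact smul_cond_add_smul_cond ht hst hνs0 hνt0 (hae hν)
  rw [integral_add_measure (hI₁.smul_measure (measure_ne_top _ _))
    (hI₂.smul_measure (measure_ne_top _ _)), integral_smul_measure, integral_smul_measure,
    ← measureReal_def, ← measureReal_def, smul_eq_mul, smul_eq_mul]
  rw [integral_log_cond hμ hs hpos.ne', integral_log_cond hν hs (hμν ▸ hpos.ne'), ← hμν] at hle₁
  rw [integral_log_cond hμ ht (by linarith), integral_log_cond hν ht (by linarith), hνt,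
    hμt] at hle₂
  have hsplit : ∀ {ρ : Measure (E × ℝ)} {k : E × ℝ → ℝ},
      HasFiniteEntropy (volume.prod volume) ρ k → ∫ z, Real.log (k z) ∂ρ =
        ∫ z in s, Real.log (k z) ∂ρ + ∫ z in t, Real.log (k z) ∂ρ := fun h => by
    rw [← setIntegral_union hst ht h.integrable_log.integrableOn h.integrable_log.integrableOn,
      Measure.restrict_eq_self_of_ae_mem (hae h)]
  rw [hsplit hμ, hsplit hν, hμt]
  set p := μ.real s
  have hbin := Real.binEntropy_le_log_two (p := p)
  rw [Real.binEntropy_eq_negMulLog_add_negMulLog_one_sub, Real.negMulLog, Real.negMulLog] at hbin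
  have hlog : Real.log (2 * Real.pi) = Real.log (Real.pi / 2) + 2 * Real.log 2 := by
    rw [Real.log_mul two_ne_zero Real.pi_ne_zero, Real.log_div Real.pi_ne_zero two_ne_zero]
    ring
  have h1 := mul_le_mul_of_nonneg_left hle₁ hpos.le
  have h2 := mul_le_mul_of_nonneg_left hle₂ (sub_pos.2 hlt).le
  have hq : 1 - p ≠ 0 := (sub_pos.2 hlt).ne'
  have e1 : ∀ {q a b : ℝ}, q ≠ 0 → q * (-(q⁻¹ * a - Real.log q) - (q⁻¹ * b - Real.log q)) =
      -a - b + 2 * (q * Real.log q) := fun hq => by field_simp; ring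
  rw [e1 hpos.ne'] at h1
  rw [e1 hq] at h2
  rw [hlog]
  linarith

end Glue

section Shear

variable {E : Type*} [NormedAddCommGroup E] [InnerProductSpace ℝ E] [FiniteDimensional ℝ E]
  [MeasurableSpace E] [BorelSpace E]

/-- The affine shear `(x, r) ↦ (x - a - (r - s) • b, r - s)`. -/
noncomputable def shearFst (a b : E) (s : ℝ) : E × ℝ ≃ᵐ E × ℝ where
  toFun z := (z.1 - a - (z.2 - s) • b, z.2 - s)
  invFun z := (z.1 + a + z.2 • b, z.2 + s)
  left_inv z := Prod.ext (by simp only; module) (by simp)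
  right_inv z := Prod.ext (by simp only; module) (by simp)
  measurable_toFun := by simp only [Equiv.coe_fn_mk]; fun_prop
  measurable_invFun := by simp only [Equiv.coe_fn_symm_mk]; fun_prop

/-- The linear shear `(y, t) ↦ (y, t + ⟪b, y⟫)`. -/
noncomputable def shearSnd (b : E) : E × ℝ ≃ᵐ E × ℝ where
  toFun z := (z.1, z.2 + ⟪b, z.1⟫)
  invFun z := (z.1, z.2 - ⟪b, z.1⟫)
  left_inv z := by ext <;> simp
  right_inv z := by ext <;> simp
  measurable_toFun := by simp only [Equiv.coe_fn_mk]; fun_prop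
  measurable_invFun := by simp only [Equiv.coe_fn_symm_mk]; fun_prop

theorem measurePreserving_shearSnd (b : E) :
    MeasurePreserving (shearSnd b) (volume.prod volume) (volume.prod volume) :=
  (MeasurePreserving.id (volume : Measure E)).skew_product (g := fun y t => t + ⟪b, y⟫)
    (by unfold Function.uncurry; fun_prop)
    (ae_of_all _ fun y => (measurePreserving_add_right volume ⟪b, y⟫).map_eq)

theorem measurePreserving_shearFst (a b : E) (s : ℝ) :
    MeasurePreserving (shearFst a b s) (volume.prod volume) (volume.prod volume) := by
  have h1 : MeasurePreserving (fun p : ℝ × E => (p.1 - s, p.2 - (a + (p.1 - s) • b)))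
      (volume.prod volume) (volume.prod volume) :=
    (measurePreserving_sub_right (volume : Measure ℝ) s).skew_product
      (g := fun r x => x - (a + (r - s) • b))
      (by unfold Function.uncurry; fun_prop)
      (ae_of_all _ fun r => (measurePreserving_sub_right volume _).map_eq)
  have h2 := Measure.measurePreserving_swap.comp (h1.comp
    (Measure.measurePreserving_swap (μ := (volume : Measure E)) (ν := (volume : Measure ℝ))))
  convert h2 using 1
  ext z <;> simp [shearFst, sub_sub]

theorem exists_coupling_of_split {c : ℝ} {μ ν : Measure (E × ℝ)} {f g : E × ℝ → ℝ}
    (hE : EntropyCorrelationBound E c)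
    (hμ : HasFiniteEntropy (volume.prod volume) μ f)
    (hν : HasFiniteEntropy (volume.prod volume) ν g)
    (hμ1 : Integrable (fun z => ‖z.1‖ ^ 2) μ) (hμ2 : Integrable (fun z => z.2 ^ 2) μ)
    (hν1 : Integrable (fun z => ‖z.1‖ ^ 2) ν) (hν2 : Integrable (fun z => z.2 ^ 2) ν)
    (hcν1 : ∫ z, z.1 ∂ν = 0) (hcν2 : ∫ z, z.2 ∂ν = 0) {a b : E} {s : ℝ}
    (hμν : μ.real {z | s < z.2} = ν.real {z | 0 < z.2 + ⟪b, z.1⟫})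
    (hpos : 0 < μ.real {z | s < z.2}) (hlt : μ.real {z | s < z.2} < 1)
    (hcpos : ∫ z in {z | s < z.2}, (z.1 - a - (z.2 - s) • b) ∂μ = 0)
    (hcneg : ∫ z in {z | z.2 < s}, (z.1 - a - (z.2 - s) • b) ∂μ = 0) :
    ∃ π, IsCoupling π μ ν ∧ -∫ z, Real.log (f z) ∂μ - ∫ z, Real.log (g z) ∂ν ≤
      c + Real.log (2 * Real.pi) + ∫ p, (⟪p.1.1, p.2.1⟫ + p.1.2 * p.2.2) ∂π := by
  have := hμ.isProbabilityMeasure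
  have := hν.isProbabilityMeasure
  have hfst : ∀ {ρ : Measure (E × ℝ)}, Integrable (fun z => ‖z.1‖ ^ 2) ρ →
      MemLp (fun z => z.1) 2 ρ := fun h =>
    (memLp_two_iff_integrable_sq_norm (Continuous.aestronglyMeasurable (by fun_prop))).2 h
  have hsnd : ∀ {ρ : Measure (E × ℝ)}, Integrable (fun z => z.2 ^ 2) ρ →
      MemLp (fun z => z.2) 2 ρ := fun h =>
    (memLp_two_iff_integrable_sq (Continuous.aestronglyMeasurable (by fun_prop))).2 h
  have hμ1' : Integrable (fun z => ‖z.1‖ ^ 2) (μ.map (shearFst a b s)) := by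
    rw [integrable_map_equiv]
    refine (memLp_two_iff_integrable_sq_norm
      (Measurable.aestronglyMeasurable (by fun_prop))).1 ?_
    exact ((hfst hμ1).sub (memLp_const a)).sub
      ((memLp_top_const b).smul (p := 2) ((hsnd hμ2).sub (memLp_const s)))
  have hμ2' : Integrable (fun z => z.2 ^ 2) (μ.map (shearFst a b s)) := by
    rw [integrable_map_equiv]
    exact ((hsnd hμ2).sub (memLp_const s)).integrable_sq
  have hν1' : Integrable (fun z => ‖z.1‖ ^ 2) (ν.map (shearSnd b)) :=
    (integrable_map_equiv _ _).2 hν1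
  have hν2' : Integrable (fun z => z.2 ^ 2) (ν.map (shearSnd b)) := by
    rw [integrable_map_equiv]
    exact ((hsnd hν2).add ((hfst hν1).const_inner b)).integrable_sq
  have hp : (μ.map (shearFst a b s)).real {z | 0 < z.2} = μ.real {z | s < z.2} := by
    rw [measureReal_def, MeasurableEquiv.map_apply, ← measureReal_def]
    simp [shearFst, preimage]
  have hq : (ν.map (shearSnd b)).real {z | 0 < z.2} = ν.real {z | 0 < z.2 + ⟪b, z.1⟫} := by
    rw [measureReal_def, MeasurableEquiv.map_apply, ← measureReal_def]
    rfl
  obtain ⟨π, hπ, hle⟩ := exists_coupling_of_halfSpaces hE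
    (hμ.map _ (measurePreserving_shearFst a b s)) (hν.map _ (measurePreserving_shearSnd b))
    hμ1' hμ2' hν1' hν2' (by rw [hp, hq, hμν]) (hp ▸ hpos) (hp ▸ hlt)
    (by
      rw [(shearFst a b s).measurableEmbedding.setIntegral_map]
      simpa [shearFst, preimage] using hcpos)
    (by
      rw [(shearFst a b s).measurableEmbedding.setIntegral_map]
      simpa [shearFst, preimage] using hcneg)
  refine ⟨_, hπ.map_symm, ?_⟩
  rw [integral_log_comp_symm, integral_log_comp_symm] at hle
  refine hle.trans_eq ?_
  congr 1
  have hπ' := hπ.map_symm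
  set π' := π.map ((shearFst a b s).symm.prodCongr (shearSnd b).symm) with hπ'_def
  have hback : π = π'.map ((shearFst a b s).prodCongr (shearSnd b)) := by
    rw [hπ'_def, Measure.map_map (MeasurableEquiv.measurable _) (MeasurableEquiv.measurable _)]
    convert Measure.map_id.symm
    ext p <;> simp [MeasurableEquiv.prodCongr]
  have hcorr : Integrable (fun z : E × ℝ => ⟪a, z.1⟫ + s * z.2) ν :=
    ((hfst hν1).const_inner a).integrable one_le_two |>.add
      (((hsnd hν2).integrable one_le_two).const_mul s)
  have hzero : ∫ z, (⟪a, z.1⟫ + s * z.2) ∂ν = 0 := by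
    rw [integral_add (((hfst hν1).const_inner a).integrable one_le_two)
      (((hsnd hν2).integrable one_le_two).const_mul s), integral_const_mul, hcν2,
      integral_inner ((hfst hν1).integrable one_le_two), hcν1]
    simp
  have hpair : ∀ p : (E × ℝ) × (E × ℝ),
      ⟪(shearFst a b s p.1).1, (shearSnd b p.2).1⟫ +
        (shearFst a b s p.1).2 * (shearSnd b p.2).2 =
      (⟪p.1.1, p.2.1⟫ + p.1.2 * p.2.2) - (⟪a, p.2.1⟫ + s * p.2.2) := fun p => by
    simp only [shearFst, shearSnd, MeasurableEquiv.coe_mk, Equiv.coe_fn_mk, inner_sub_left,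
      inner_smul_left, RCLike.conj_to_real]
    ring
  rw [hback, integral_map_equiv]
  refine (integral_congr_ae (ae_of_all _ hpair)).trans ?_
  rw [integral_sub (hπ'.integrable_inner_add_mul hμ1 hμ2 hν1 hν2)
    (hπ'.integrable_comp_snd hcorr), hπ'.integral_comp_snd hcorr, hzero, sub_zero]

end Shear

theorem continuousAt_setIntegral_pos {X Ω G : Type*} [TopologicalSpace X]
    [FirstCountableTopology X] [MeasurableSpace Ω] [NormedAddCommGroup G] [NormedSpace ℝ G]
    {μ : Measure Ω} {h : X → Ω → ℝ} {x₀ : X} (hmeas : ∀ x, Measurable (h x))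
    (hcont : ∀ ω, ContinuousAt (fun x => h x ω) x₀) (h0 : ∀ᵐ ω ∂μ, h x₀ ω ≠ 0) {F : Ω → G}
    (hF : Integrable F μ) : ContinuousAt (fun x => ∫ ω in {ω | 0 < h x ω}, F ω ∂μ) x₀ := by
  have hs : ∀ x, MeasurableSet {ω | 0 < h x ω} := fun x =>
    measurableSet_lt measurable_const (hmeas x)
  simp_rw [← integral_indicator (hs _)]
  refine continuousAt_of_dominated (bound := fun ω => ‖F ω‖)
    (Eventually.of_forall fun x => hF.aestronglyMeasurable.indicator (hs x))
    (Eventually.of_forall fun x => ae_of_all _ fun ω => norm_indicator_le_norm_self _ _)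
    hF.norm ?_
  filter_upwards [h0] with ω hω
  rcases lt_or_gt_of_ne hω with hlt | hgt
  · refine continuousAt_const (y := (0 : G)) |>.congr ?_
    filter_upwards [(hcont ω).eventually_lt_const hlt] with x hx
    rw [indicator_of_notMem]
    simp [hx.le]
  · refine continuousAt_const (y := F ω) |>.congr ?_
    filter_upwards [(hcont ω).eventually_const_lt hgt] with x hx
    rw [indicator_of_mem]
    simpa using hx

section HalfSpaceMass

variable {E : Type*} [NormedAddCommGroup E] [InnerProductSpace ℝ E] [FiniteDimensional ℝ E]
  [MeasurableSpace E] [BorelSpace E] {ν : Measure (E × ℝ)}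

theorem ae_mul_add_inner_ne_zero (hν : ν ≪ volume.prod volume) {w : E × ℝ} (hw : w ≠ 0) :
    ∀ᵐ z ∂ν, w.2 * z.2 + ⟪w.1, z.1⟫ ≠ 0 := by
  let L : E × ℝ →ₗ[ℝ] ℝ :=
    w.2 • LinearMap.snd ℝ E ℝ + (innerₗ E w.1).comp (LinearMap.fst ℝ E ℝ)
  have hL : ∀ z, L z = w.2 * z.2 + ⟪w.1, z.1⟫ := fun z => by simp [L]
  have hker : L.ker ≠ ⊤ := fun h => by
    have h1 : L w = 0 := by
      rw [← LinearMap.mem_ker, h]; trivial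
    rw [hL, real_inner_self_eq_norm_sq] at h1
    refine hw (Prod.ext ?_ ?_)
    · simpa using (by nlinarith [mul_self_nonneg w.2, sq_nonneg ‖w.1‖] : ‖w.1‖ ^ 2 = 0)
    · simpa using (by nlinarith [mul_self_nonneg w.2, sq_nonneg ‖w.1‖] : w.2 * w.2 = 0)
  have h0 := Measure.addHaar_submodule ((volume : Measure E).prod (volume : Measure ℝ)) _ hker
  refine hν.ae_le (mem_ae_iff.2 ?_)
  convert h0 using 2
  ext z
  simp [hL]

theorem continuousAt_measureReal_halfSpace [IsFiniteMeasure ν] (hν : ν ≪ volume.prod volume)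
    {w : E × ℝ} (hw : w ≠ 0) :
    ContinuousAt (fun w : E × ℝ => ν.real {z | 0 < w.2 * z.2 + ⟪w.1, z.1⟫}) w := by
  have h := continuousAt_setIntegral_pos (μ := ν) (x₀ := w)
    (h := fun (w z : E × ℝ) => w.2 * z.2 + ⟪w.1, z.1⟫) (fun w => by fun_prop)
    (fun z => Continuous.continuousAt (by fun_prop)) (ae_mul_add_inner_ne_zero hν hw)
    (integrable_const (1 : ℝ))
  simpa using h

theorem measureReal_halfSpace_pos [IsProbabilityMeasure ν] (hν : ν ≪ volume.prod volume)
    (h1 : Integrable (fun z => z.1) ν) (h2 : Integrable (fun z => z.2) ν)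
    (hc1 : ∫ z, z.1 ∂ν = 0) (hc2 : ∫ z, z.2 ∂ν = 0) {w : E × ℝ} (hw : w ≠ 0) :
    0 < ν.real {z | 0 < w.2 * z.2 + ⟪w.1, z.1⟫} := by
  have hI : Integrable (fun z => w.2 * z.2 + ⟪w.1, z.1⟫) ν :=
    (h2.const_mul _).add (h1.const_inner _)
  have hI0 : ∫ z, (w.2 * z.2 + ⟪w.1, z.1⟫) ∂ν = 0 := by
    rw [integral_add (h2.const_mul _) (h1.const_inner _), integral_const_mul, hc2,
      integral_inner h1, hc1]
    simp
  refine lt_of_le_of_ne measureReal_nonneg fun h0 => ?_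
  have hle : ∀ᵐ z ∂ν, 0 ≤ -(w.2 * z.2 + ⟪w.1, z.1⟫) := by
    rw [ae_iff]
    have := (measureReal_eq_zero_iff).1 h0.symm
    simpa only [not_le, neg_lt_zero] using this
  have hz := (integral_eq_zero_iff_of_nonneg_ae hle hI.neg).1
    (by rw [← neg_eq_zero, ← integral_neg]; simpa using hI0)
  have hF : ∀ᵐ z ∂ν, False := by
    filter_upwards [hz, ae_mul_add_inner_ne_zero hν hw] with z hz hz'
    exact hz' (neg_eq_zero.1 hz)
  simp at hF
  exact IsProbabilityMeasure.ne_zero ν hF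

theorem exists_forall_le_measureReal_halfSpace [IsProbabilityMeasure ν]
    (hν : ν ≪ volume.prod volume)
    (h1 : Integrable (fun z => z.1) ν) (h2 : Integrable (fun z => z.2) ν)
    (hc1 : ∫ z, z.1 ∂ν = 0) (hc2 : ∫ z, z.2 ∂ν = 0) :
    ∃ ε > 0, ∀ w : E × ℝ, w ≠ 0 → ε ≤ ν.real {z | 0 < w.2 * z.2 + ⟪w.1, z.1⟫} ∧
      ν.real {z | 0 < w.2 * z.2 + ⟪w.1, z.1⟫} ≤ 1 - ε := by
  have hcont : ContinuousOn (fun w : E × ℝ => ν.real {z | 0 < w.2 * z.2 + ⟪w.1, z.1⟫})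
      (Metric.sphere 0 1) := fun w hw =>
    (continuousAt_measureReal_halfSpace hν
      (ne_zero_of_mem_unit_sphere ⟨w, hw⟩)).continuousWithinAt
  obtain ⟨w₀, hw₀, hmin⟩ := (isCompact_sphere (0 : E × ℝ) 1).exists_isMinOn
    (NormedSpace.sphere_nonempty.2 zero_le_one) hcont
  set ε := ν.real {z | 0 < w₀.2 * z.2 + ⟪w₀.1, z.1⟫}
  have hε : 0 < ε :=
    measureReal_halfSpace_pos hν h1 h2 hc1 hc2 (ne_zero_of_mem_unit_sphere ⟨w₀, hw₀⟩)
  have hlow : ∀ w : E × ℝ, w ≠ 0 → ε ≤ ν.real {z | 0 < w.2 * z.2 + ⟪w.1, z.1⟫} := by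
    intro w hw
    have hn : 0 < ‖w‖ := norm_pos_iff.2 hw
    have h := isMinOn_iff.1 hmin (‖w‖⁻¹ • w) (by simp [norm_smul, hn.ne'])
    refine h.trans_eq ?_
    congr 1
    ext z
    have : (‖w‖⁻¹ • w).2 * z.2 + ⟪(‖w‖⁻¹ • w).1, z.1⟫ =
        ‖w‖⁻¹ * (w.2 * z.2 + ⟪w.1, z.1⟫) := by
      simp [inner_smul_left]; ring
    simp only [mem_ofPred_eq, this]
    exact mul_pos_iff_of_pos_left (inv_pos.2 hn)
  refine ⟨ε, hε, fun w hw => ⟨hlow w hw, ?_⟩⟩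
  have h := hlow (-w) (neg_ne_zero.2 hw)
  have hd : Disjoint {z : E × ℝ | 0 < w.2 * z.2 + ⟪w.1, z.1⟫}
      {z | 0 < (-w).2 * z.2 + ⟪(-w).1, z.1⟫} := disjoint_left.2 fun z h h' => by
    simp only [mem_ofPred_eq, Prod.fst_neg, Prod.snd_neg, inner_neg_left] at h h'
    linarith
  have hu := measureReal_union (μ := ν) hd
    (measurableSet_lt measurable_const (by fun_prop))
  have hle : ν.real ({z : E × ℝ | 0 < w.2 * z.2 + ⟪w.1, z.1⟫} ∪
      {z | 0 < (-w).2 * z.2 + ⟪(-w).1, z.1⟫}) ≤ 1 := measureReal_le_one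
  linarith

end HalfSpaceMass

theorem mul_integral_lt_setIntegral_snd {E : Type*} [MeasurableSpace E] {μ : Measure (E × ℝ)}
    [IsProbabilityMeasure μ]
    (h2 : Integrable (fun z => z.2) μ) {s : ℝ}
    (hpos : 0 < μ.real {z | s < z.2}) (hlt : μ.real {z | s < z.2} < 1) :
    μ.real {z | s < z.2} * ∫ z, z.2 ∂μ < ∫ z in {z | s < z.2}, z.2 ∂μ := by
  have hs : MeasurableSet {z : E × ℝ | s < z.2} := measurableSet_lt measurable_const measurable_snd
  have hI : Integrable (fun z => z.2 - s) μ := h2.sub (integrable_const s)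
  have e1 : ∫ z in {z | s < z.2}, (z.2 - s) ∂μ =
      ∫ z in {z | s < z.2}, z.2 ∂μ - μ.real {z | s < z.2} * s := by
    rw [integral_sub h2.integrableOn (integrable_const s), setIntegral_const, smul_eq_mul]
  have e2 : ∫ z, (z.2 - s) ∂μ = ∫ z, z.2 ∂μ - s := by
    rw [integral_sub h2 (integrable_const s)]
    simp
  have e3 := integral_add_compl hs hI
  have e4 : ∫ z in {z | s < z.2}ᶜ, (z.2 - s) ∂μ ≤ 0 :=
    setIntegral_nonpos hs.compl fun z hz => by
      simp only [mem_compl_iff, mem_ofPred_eq, not_lt] at hz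
      linarith
  have e5 : 0 < ∫ z in {z | s < z.2}, (z.2 - s) ∂μ := by
    rw [setIntegral_pos_iff_support_of_nonneg_ae]
    · have : (Function.support fun z : E × ℝ => z.2 - s) ∩ {z | s < z.2} = {z | s < z.2} :=
        inter_eq_right.2 fun z hz => (sub_pos.2 hz).ne'
      rw [this]
      exact pos_iff_ne_zero.2 fun h0 => by simp [measureReal_def, h0] at hpos
    · exact ae_restrict_of_forall_mem hs fun z hz => (sub_pos.2 hz).le
    · exact hI.integrableOn
  nlinarith

section Split

variable {E : Type*} [NormedAddCommGroup E] [InnerProductSpace ℝ E] [FiniteDimensional ℝ E]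
  [MeasurableSpace E] [BorelSpace E] {μ ν : Measure (E × ℝ)}

theorem ae_snd_ne (hμ : μ ≪ volume.prod volume) (s : ℝ) : ∀ᵐ z ∂μ, z.2 ≠ s := by
  have h0 : ∀ᵐ r : ℝ, r ≠ s := by simp [ae_iff]
  exact hμ.ae_le (Measure.quasiMeasurePreserving_snd.ae h0)

theorem continuous_setIntegral_lt_snd (hμ : μ ≪ volume.prod volume) {G : Type*}
    [NormedAddCommGroup G] [NormedSpace ℝ G] {F : E × ℝ → G} (hF : Integrable F μ) :
    Continuous fun s : ℝ => ∫ z in {z | s < z.2}, F z ∂μ := by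
  rw [continuous_iff_continuousAt]
  intro s
  have h := continuousAt_setIntegral_pos (μ := μ) (x₀ := s)
    (h := fun (s : ℝ) (z : E × ℝ) => z.2 - s) (fun s => by fun_prop)
    (fun z => Continuous.continuousAt (by fun_prop))
    ((ae_snd_ne hμ s).mono fun z hz => sub_ne_zero.2 hz) hF
  simpa only [sub_pos] using h

theorem exists_split [IsProbabilityMeasure μ] [IsProbabilityMeasure ν]
    (hμ : μ ≪ volume.prod volume) (hν : ν ≪ volume.prod volume)
    (hμ1 : Integrable (fun z => z.1) μ) (hμ2 : Integrable (fun z => z.2) μ)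
    (hν1 : Integrable (fun z => z.1) ν) (hν2 : Integrable (fun z => z.2) ν)
    (hc1 : ∫ z, z.1 ∂ν = 0) (hc2 : ∫ z, z.2 ∂ν = 0) :
    ∃ (a b : E) (s : ℝ), μ.real {z | s < z.2} = ν.real {z | 0 < z.2 + ⟪b, z.1⟫} ∧
      0 < μ.real {z | s < z.2} ∧ μ.real {z | s < z.2} < 1 ∧
      ∫ z in {z | s < z.2}, (z.1 - a - (z.2 - s) • b) ∂μ = 0 ∧
      ∫ z in {z | z.2 < s}, (z.1 - a - (z.2 - s) • b) ∂μ = 0 := by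
  obtain ⟨ε, hε, hQ⟩ := exists_forall_le_measureReal_halfSpace hν hν1 hν2 hc1 hc2
  let Q : E × ℝ → ℝ := fun w => ν.real {z | 0 < w.2 * z.2 + ⟪w.1, z.1⟫}
  let p : ℝ → ℝ := fun s => μ.real {z | s < z.2}
  let v : ℝ → E × ℝ := fun s => (∫ z in {z | s < z.2}, z.1 ∂μ - p s • ∫ z, z.1 ∂μ,
    ∫ z in {z | s < z.2}, z.2 ∂μ - p s * ∫ z, z.2 ∂μ)
  have hp : Continuous p := by
    have := continuous_setIntegral_lt_snd hμ (integrable_const (1 : ℝ))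
    simpa using this
  have hv : Continuous v :=
    ((continuous_setIntegral_lt_snd hμ hμ1).sub (hp.smul continuous_const)).prodMk
      ((continuous_setIntegral_lt_snd hμ hμ2).sub (hp.mul continuous_const))
  have hanti : Antitone p := fun s t hst =>
    measureReal_mono fun z (hz : t < z.2) => hst.trans_lt hz
  have hvpos : ∀ s, 0 < p s → p s < 1 → 0 < (v s).2 := fun s h0 h1 =>
    sub_pos.2 (mul_integral_lt_setIntegral_snd hμ2 h0 h1)
  have hv0 : ∀ s, 0 < p s → p s < 1 → v s ≠ 0 := fun s h0 h1 h => by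
    have := hvpos s h0 h1
    simp [h] at this
  have hcdf : ∀ s, p s = 1 - cdf (μ.map Prod.snd) s := fun s => by
    have := Measure.isProbabilityMeasure_map (μ := μ) measurable_snd.aemeasurable
    rw [cdf_eq_real, map_measureReal_apply measurable_snd measurableSet_Iic,
      ← probReal_compl_eq_one_sub (measurable_snd measurableSet_Iic)]
    change μ.real {z | s < z.2} = _
    congr 1
    ext z
    simp
  have hbot : Tendsto p atBot (𝓝 1) := by
    have := (tendsto_cdf_atBot (μ.map Prod.snd)).const_sub 1
    simpa [← hcdf] using this
  have htop : Tendsto p atTop (𝓝 0) := by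
    have := (tendsto_cdf_atTop (μ.map Prod.snd)).const_sub 1
    simpa [← hcdf] using this
  have hε2 : ε ≤ 1 / 2 := by
    have := hQ (0, 1) (by simp)
    linarith
  have hsurj : ∀ q, 0 < q → q < 1 → ∃ s, p s = q := fun q h0 h1 => by
    obtain ⟨s, hs⟩ := (htop.eventually_lt_const h0).exists
    obtain ⟨t, ht⟩ := (hbot.eventually_const_lt h1).exists
    exact mem_range_of_exists_le_of_exists_ge hp ⟨s, hs.le⟩ ⟨t, ht.le⟩
  obtain ⟨s₀, hs₀⟩ := hsurj (1 - ε / 2) (by linarith) (by linarith)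
  obtain ⟨s₁, hs₁⟩ := hsurj (ε / 2) (by linarith) (by linarith)
  have hs01 : s₀ ≤ s₁ := by
    by_contra! h
    have := hanti h.le
    linarith
  have hp01 : ∀ s ∈ Icc s₀ s₁, 0 < p s ∧ p s < 1 := fun s hs => by
    have h0 := hanti hs.1
    have h1 := hanti hs.2
    constructor <;> linarith
  have hQc : ContinuousOn (fun s => p s - Q (v s)) (Icc s₀ s₁) := fun s hs => by
    have h1 : ContinuousAt Q (v s) := continuousAt_measureReal_halfSpace hν
      (hv0 s (hp01 s hs).1 (hp01 s hs).2)
    exact (hp.continuousAt.sub (h1.comp hv.continuousAt)).continuousWithinAt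
  have hl := hQ (v s₀) (hv0 _ (by linarith) (by linarith))
  have hr := hQ (v s₁) (hv0 _ (by linarith) (by linarith))
  obtain ⟨s, hs, hps⟩ := intermediate_value_Icc' hs01 hQc
    (show (0 : ℝ) ∈ Icc (p s₁ - Q (v s₁)) (p s₀ - Q (v s₀)) by
      constructor <;> simp only [Q] <;> linarith)
  obtain ⟨h0, h1⟩ := hp01 s hs
  have hvn := hvpos s h0 h1
  set b : E := (v s).2⁻¹ • (v s).1 with hb
  set a : E := ∫ z, z.1 ∂μ - (∫ z, z.2 ∂μ - s) • b with ha
  have hvb : (v s).1 = (v s).2 • b := by rw [hb, smul_inv_smul₀ hvn.ne']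
  have hI1 : Integrable (fun z : E × ℝ => z.1 - a) μ := hμ1.sub (integrable_const a)
  have hI2 : Integrable (fun z : E × ℝ => (z.2 - s) • b) μ :=
    (hμ2.sub (integrable_const s)).smul_const b
  have hms : MeasurableSet {z : E × ℝ | s < z.2} :=
    measurableSet_lt measurable_const measurable_snd
  have hpos : ∫ z in {z | s < z.2}, (z.1 - a - (z.2 - s) • b) ∂μ = 0 := by
    rw [integral_sub hI1.integrableOn hI2.integrableOn,
      integral_sub hμ1.integrableOn (integrable_const a), integral_smul_const,
      integral_sub hμ2.integrableOn (integrable_const s), setIntegral_const, setIntegral_const]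
    have e1 : ∫ z in {z | s < z.2}, z.1 ∂μ = (v s).1 + p s • ∫ z, z.1 ∂μ := by simp [v]
    have e2 : ∫ z in {z | s < z.2}, z.2 ∂μ = (v s).2 + p s * ∫ z, z.2 ∂μ := by simp [v]
    rw [e1, e2, hvb, ha]
    change _ - p s • _ - (_ - p s • s) • b = 0
    simp only [smul_eq_mul]
    module
  have hall : ∫ z, (z.1 - a - (z.2 - s) • b) ∂μ = 0 := by
    rw [integral_sub hI1 hI2, integral_sub hμ1 (integrable_const a), integral_smul_const,
      integral_sub hμ2 (integrable_const s)]
    simp [ha]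
  refine ⟨a, b, s, ?_, h0, h1, hpos, ?_⟩
  · refine (sub_eq_zero.1 hps).trans ?_
    simp only [Q]
    congr 1
    ext z
    have : (v s).2 * z.2 + ⟪(v s).1, z.1⟫ = (v s).2 * (z.2 + ⟪b, z.1⟫) := by
      rw [hvb, real_inner_smul_left]; ring
    simp only [mem_ofPred_eq, this]
    exact mul_pos_iff_of_pos_left hvn
  · have h := integral_add_compl hms (hI1.sub hI2)
    have hae : ({z : E × ℝ | s < z.2}ᶜ : Set (E × ℝ)) =ᵐ[μ] {z | z.2 < s} := by
      filter_upwards [ae_snd_ne hμ s] with z hz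
      refine propext ?_
      change ¬ s < z.2 ↔ z.2 < s
      exact not_lt.trans (le_iff_lt_or_eq.trans (or_iff_left hz))
    rw [setIntegral_congr_set hae] at h
    have h' : ∫ z in {z | s < z.2}, (z.1 - a - (z.2 - s) • b) ∂μ +
      ∫ z in {z | z.2 < s}, (z.1 - a - (z.2 - s) • b) ∂μ =
        ∫ z, (z.1 - a - (z.2 - s) • b) ∂μ := h
    rwa [hpos, hall, zero_add] at h'

end Split

theorem IsCoupling.map_swap {Ω : Type*} [MeasurableSpace Ω] {μ ν : Measure Ω}
    {π : Measure (Ω × Ω)} (h : IsCoupling π μ ν) : IsCoupling (π.map Prod.swap) ν μ := by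
  constructor
  · rw [Measure.map_map measurable_fst measurable_swap]
    exact h.2
  · rw [Measure.map_map measurable_snd measurable_swap]
    exact h.1

theorem HasFiniteEntropy.absolutelyContinuous {Ω : Type*} [MeasurableSpace Ω] {m μ : Measure Ω}
    {f : Ω → ℝ} (h : HasFiniteEntropy m μ f) : μ ≪ m := by
  rw [h.eq_withDensity]
  exact withDensity_absolutelyContinuous _ _

section Induction

variable {E F : Type*} [NormedAddCommGroup E] [InnerProductSpace ℝ E] [FiniteDimensional ℝ E]
  [MeasurableSpace E] [BorelSpace E] [NormedAddCommGroup F] [InnerProductSpace ℝ F]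
  [FiniteDimensional ℝ F] [MeasurableSpace F] [BorelSpace F] {c : ℝ}

theorem exists_coupling_prod_real (hE : EntropyCorrelationBound E c)
    {μ ν : Measure (E × ℝ)} {f g : E × ℝ → ℝ}
    (hμ : HasFiniteEntropy (volume.prod volume) μ f)
    (hν : HasFiniteEntropy (volume.prod volume) ν g)
    (hμ1 : Integrable (fun z => ‖z.1‖ ^ 2) μ) (hμ2 : Integrable (fun z => z.2 ^ 2) μ)
    (hν1 : Integrable (fun z => ‖z.1‖ ^ 2) ν) (hν2 : Integrable (fun z => z.2 ^ 2) ν)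
    (hcμ1 : ∫ z, z.1 ∂μ = 0) (hcμ2 : ∫ z, z.2 ∂μ = 0) :
    ∃ π, IsCoupling π μ ν ∧ -∫ z, Real.log (f z) ∂μ - ∫ z, Real.log (g z) ∂ν ≤
      c + Real.log (2 * Real.pi) + ∫ p, (⟪p.1.1, p.2.1⟫ + p.1.2 * p.2.2) ∂π := by
  have := hμ.isProbabilityMeasure
  have := hν.isProbabilityMeasure
  have hfst : ∀ {ρ : Measure (E × ℝ)} [IsProbabilityMeasure ρ],
      Integrable (fun z => ‖z.1‖ ^ 2) ρ → Integrable (fun z => z.1) ρ := fun h =>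
    ((memLp_two_iff_integrable_sq_norm
      (Continuous.aestronglyMeasurable (by fun_prop))).2 h).integrable one_le_two
  have hsnd : ∀ {ρ : Measure (E × ℝ)} [IsProbabilityMeasure ρ],
      Integrable (fun z => z.2 ^ 2) ρ → Integrable (fun z => z.2) ρ := fun h =>
    ((memLp_two_iff_integrable_sq
      (Continuous.aestronglyMeasurable (by fun_prop))).2 h).integrable one_le_two
  obtain ⟨a, b, s, h1, h2, h3, h4, h5⟩ := exists_split hν.absolutelyContinuous
    hμ.absolutelyContinuous (hfst hν1) (hsnd hν2) (hfst hμ1) (hsnd hμ2) hcμ1 hcμ2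
  obtain ⟨π, hπ, hle⟩ := exists_coupling_of_split hE hν hμ hν1 hν2 hμ1 hμ2 hcμ1 hcμ2 h1 h2 h3 h4 h5
  refine ⟨_, hπ.map_swap, ?_⟩
  rw [integral_map measurable_swap.aemeasurable
    (Continuous.aestronglyMeasurable (by fun_prop))]
  have hcomm : ∀ p : (E × ℝ) × (E × ℝ),
      ⟪p.swap.1.1, p.swap.2.1⟫ + p.swap.1.2 * p.swap.2.2 = ⟪p.1.1, p.2.1⟫ + p.1.2 * p.2.2 :=
    fun p => by simp only [Prod.fst_swap, Prod.snd_swap, real_inner_comm, mul_comm]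
  simp only [hcomm]
  linarith

theorem EntropyCorrelationBound.of_linearIsometryEquiv (hE : EntropyCorrelationBound E c)
    (i : F ≃ₗᵢ[ℝ] WithLp 2 (E × ℝ)) : EntropyCorrelationBound F (c + Real.log (2 * Real.pi)) := by
  intro μ ν f g hμ hν hμ2 hν2 hcent
  have := hμ.isProbabilityMeasure
  have := hν.isProbabilityMeasure
  let e : F ≃ᵐ E × ℝ := i.toMeasurableEquiv.trans (MeasurableEquiv.toLp 2 (E × ℝ)).symm
  have he : MeasurePreserving e volume (volume.prod volume) :=
    (WithLp.volume_preserving_ofLp E ℝ).comp i.measurePreserving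
  have hinner : ∀ x y : F, ⟪x, y⟫ = ⟪(e x).1, (e y).1⟫ + (e x).2 * (e y).2 := fun x y => by
    rw [← i.inner_map_map, WithLp.prod_inner_apply, mul_comm]
    rfl
  have hnorm : ∀ x : F, ‖x‖ ^ 2 = ‖(e x).1‖ ^ 2 + (e x).2 ^ 2 := fun x => by
    rw [← real_inner_self_eq_norm_sq, hinner, real_inner_self_eq_norm_sq, sq (e x).2]
  have hfst : ∀ {ρ : Measure F}, Integrable (fun x => ‖x‖ ^ 2) ρ →
      Integrable (fun z => ‖z.1‖ ^ 2) (ρ.map e) := fun h => by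
    rw [integrable_map_equiv]
    refine h.mono' (Measurable.aestronglyMeasurable (by fun_prop)) (ae_of_all _ fun x => ?_)
    simp only [Function.comp_apply, hnorm x, norm_pow, norm_norm]
    nlinarith [sq_nonneg (e x).2]
  have hsnd : ∀ {ρ : Measure F}, Integrable (fun x => ‖x‖ ^ 2) ρ →
      Integrable (fun z => z.2 ^ 2) (ρ.map e) := fun h => by
    rw [integrable_map_equiv]
    refine h.mono' (Measurable.aestronglyMeasurable (by fun_prop)) (ae_of_all _ fun x => ?_)
    simp only [Function.comp_apply, hnorm x, norm_pow, Real.norm_eq_abs, sq_abs]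
    nlinarith [sq_nonneg ‖(e x).1‖]
  have hμ1 : Integrable (fun x => x) μ :=
    ((memLp_two_iff_integrable_sq_norm
      (Continuous.aestronglyMeasurable (by fun_prop))).2 hμ2).integrable one_le_two
  have hcentL : ∫ x, i x ∂μ = 0 := by
    have := i.toContinuousLinearEquiv.toContinuousLinearMap.integral_comp_comm hμ1
    simpa [hcent] using this
  have hi : Integrable (fun x => i x) μ :=
    i.toContinuousLinearEquiv.toContinuousLinearMap.integrable_comp hμ1
  have hc1 : ∫ z, z.1 ∂μ.map e = 0 := by
    rw [integral_map_equiv]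
    have := (WithLp.fstL 2 ℝ E ℝ).integral_comp_comm hi
    rw [hcentL, map_zero] at this
    exact this
  have hc2 : ∫ z, z.2 ∂μ.map e = 0 := by
    rw [integral_map_equiv]
    have := (WithLp.sndL 2 ℝ E ℝ).integral_comp_comm hi
    rw [hcentL, map_zero] at this
    exact this
  obtain ⟨π, hπ, hle⟩ := exists_coupling_prod_real hE (hμ.map e he) (hν.map e he)
    (hfst hμ2) (hsnd hμ2) (hfst hν2) (hsnd hν2) hc1 hc2
  refine ⟨_, hπ.map_symm, ?_⟩
  rw [integral_log_comp_symm, integral_log_comp_symm] at hle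
  refine hle.trans_eq ?_
  congr 1
  rw [integral_map_equiv]
  refine integral_congr_ae (ae_of_all _ fun p => ?_)
  simp [hinner, MeasurableEquiv.prodCongr]

theorem entropyCorrelationBound_fin_zero :
    EntropyCorrelationBound (EuclideanSpace ℝ (Fin 0)) 0 := by
  intro μ ν f g hμ hν _ _ _
  have := hμ.isProbabilityMeasure
  have := hν.isProbabilityMeasure
  have hone : ∀ {ρ : Measure (EuclideanSpace ℝ (Fin 0))} {k : EuclideanSpace ℝ (Fin 0) → ℝ},
      HasFiniteEntropy volume ρ k → ∫ x, Real.log (k x) ∂ρ = 0 := fun {ρ} {k} h => by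
    have := h.isProbabilityMeasure
    have h1 : ρ univ = 1 := measure_univ
    rw [h.eq_withDensity, withDensity_apply _ MeasurableSet.univ, Measure.restrict_univ,
      volume_euclideanSpace_eq_dirac, lintegral_dirac, ENNReal.ofReal_eq_one] at h1
    refine integral_eq_zero_of_ae (ae_of_all _ fun x => ?_)
    simp [Subsingleton.elim x 0, h1]
  refine ⟨μ.prod ν, ⟨?_, ?_⟩, ?_⟩
  · exact Measure.fst_prod
  · exact Measure.snd_prod
  · rw [hone hμ, hone hν]
    simp [Subsingleton.elim _ (0 : EuclideanSpace ℝ (Fin 0))]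

theorem entropyCorrelationBound_euclideanSpace (n : ℕ) :
    EntropyCorrelationBound (EuclideanSpace ℝ (Fin n)) (n * Real.log (2 * Real.pi)) := by
  induction n with
  | zero => simpa using entropyCorrelationBound_fin_zero
  | succ n ih =>
    have hrank : Module.finrank ℝ (WithLp 2 (EuclideanSpace ℝ (Fin n) × ℝ)) = n + 1 := by
      rw [(WithLp.linearEquiv 2 ℝ (EuclideanSpace ℝ (Fin n) × ℝ)).finrank_eq]
      simp
    have h := ih.of_linearIsometryEquiv
      ((stdOrthonormalBasis ℝ (WithLp 2 (EuclideanSpace ℝ (Fin n) × ℝ))).reindex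
        (finCongr hrank)).repr.symm
    convert h using 1
    push_cast
    ring

end Induction

end EntropyCorrelation

section Gaussian

variable {d : ℕ}

theorem exists_hasFiniteEntropy_of_stdGaussian {μ : Measure (EuclideanSpace ℝ (Fin d))}
    [IsProbabilityMeasure μ] (hμ : μ ≪ stdGaussian d)
    (hlog : Integrable (fun x => Real.log (μ.rnDeriv (stdGaussian d) x).toReal) μ)
    (h2 : Integrable (fun x => ‖x‖ ^ 2) μ) :
    ∃ f, HasFiniteEntropy volume μ f ∧ ∫ x, Real.log (f x) ∂μ =
      ∫ x, Real.log (μ.rnDeriv (stdGaussian d) x).toReal ∂μ -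
        d / 2 * Real.log (2 * Real.pi) - (∫ x, ‖x‖ ^ 2 ∂μ) / 2 := by
  have hsf : SigmaFinite (stdGaussian d) := by unfold stdGaussian; infer_instance
  set r : EuclideanSpace ℝ (Fin d) → ℝ := fun x => (μ.rnDeriv (stdGaussian d) x).toReal with hr
  let G : EuclideanSpace ℝ (Fin d) → ℝ := fun x =>
    (2 * Real.pi) ^ (-(d : ℝ) / 2) * Real.exp (-‖x‖ ^ 2 / 2)
  have hrm : Measurable r := (Measure.measurable_rnDeriv _ _).ennreal_toReal
  have hGm : Measurable G := by fun_prop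
  have hGpos : ∀ x, 0 < G x := fun x => by positivity
  have hμr : μ = (stdGaussian d).withDensity fun x => ENNReal.ofReal (r x) := by
    conv_lhs => rw [← Measure.withDensity_rnDeriv_eq _ _ hμ]
    refine withDensity_congr_ae ?_
    filter_upwards [Measure.rnDeriv_lt_top μ (stdGaussian d)] with x hx
    exact (ENNReal.ofReal_toReal hx.ne).symm
  have hμf : μ = volume.withDensity fun x => ENNReal.ofReal (G x * r x) := by
    have h : μ = (volume.withDensity fun x => ENNReal.ofReal (G x)).withDensity
      fun x => ENNReal.ofReal (r x) := hμr
    rw [← withDensity_mul _ (by fun_prop) (by fun_prop)] at h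
    refine h.trans (congrArg _ (funext fun x => ?_))
    simp only [Pi.mul_apply]
    rw [ENNReal.ofReal_mul (hGpos x).le]
  have hlogf : ∀ᵐ x ∂μ, Real.log (r x) - d / 2 * Real.log (2 * Real.pi) - ‖x‖ ^ 2 / 2 =
      Real.log (G x * r x) := by
    filter_upwards [ae_pos_of_eq_withDensity hrm hμr] with x hx
    rw [Real.log_mul (hGpos x).ne' hx.ne', Real.log_mul (by positivity) (Real.exp_ne_zero _),
      Real.log_exp, Real.log_rpow (by positivity)]
    ring
  have hI : Integrable (fun x => Real.log (r x) - d / 2 * Real.log (2 * Real.pi)) μ :=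
    hlog.sub (integrable_const _)
  refine ⟨fun x => G x * r x, ⟨by fun_prop,
    fun x => mul_nonneg (hGpos x).le ENNReal.toReal_nonneg, hμf, inferInstance,
    (hI.sub (h2.div_const 2)).congr hlogf⟩, ?_⟩
  rw [← integral_congr_ae hlogf, integral_sub hI (h2.div_const 2),
    integral_sub hlog (integrable_const _), integral_div]
  simp

end Gaussian

/-- **Sharp symmetrized Talagrand inequality** (Theorem 1.1, Fathi): for any centered
probability measure `μ` on `ℝ^d` with finite second moment and any probability measure `ν`
with finite second moment, `W₂(μ,ν)² ≤ 2 Ent_γ(μ) + 2 Ent_γ(ν)`. -/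
theorem symmetrized_talagrand (d : ℕ) (hd : 1 ≤ d)
    (μ ν : Measure (EuclideanSpace ℝ (Fin d)))
    [IsProbabilityMeasure μ] [IsProbabilityMeasure ν]
    (hμ2 : Integrable (fun x => ‖x‖ ^ 2) μ) (hν2 : Integrable (fun x => ‖x‖ ^ 2) ν)
    (hcent : ∫ x, x ∂μ = 0) :
    W2sq μ ν ≤ 2 * relEnt μ (stdGaussian d) + 2 * relEnt ν (stdGaussian d) := by
  by_cases hμ : μ ≪ stdGaussian d ∧
    Integrable (fun x => Real.log (μ.rnDeriv (stdGaussian d) x).toReal) μ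
  swap
  · simp [relEnt, hμ]
  by_cases hν : ν ≪ stdGaussian d ∧
    Integrable (fun x => Real.log (ν.rnDeriv (stdGaussian d) x).toReal) ν
  swap
  · simp [relEnt, hν]
  obtain ⟨f, hf, hfeq⟩ := exists_hasFiniteEntropy_of_stdGaussian hμ.1 hμ.2 hμ2
  obtain ⟨g, hg, hgeq⟩ := exists_hasFiniteEntropy_of_stdGaussian hν.1 hν.2 hν2
  obtain ⟨π, hπ, hle⟩ :=
    entropyCorrelationBound_euclideanSpace d μ ν f g hf hg hμ2 hν2 hcent
  have hI1 := hπ.integrable_comp_fst hμ2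
  have hI2 := hπ.integrable_comp_snd hν2
  have hI3 := (hπ.integrable_inner hμ2 hν2).const_mul 2
  have hI12 : Integrable (fun p : EuclideanSpace ℝ (Fin d) × EuclideanSpace ℝ (Fin d) =>
    ‖p.1‖ ^ 2 + ‖p.2‖ ^ 2) π := hI1.add hI2
  have hexp : ∀ p : EuclideanSpace ℝ (Fin d) × EuclideanSpace ℝ (Fin d),
      ‖p.1‖ ^ 2 + ‖p.2‖ ^ 2 - 2 * ⟪p.1, p.2⟫ = ‖p.1 - p.2‖ ^ 2 := fun p => by
    rw [norm_sub_sq_real]; ring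
  have hcost : ∫ p, ‖p.1 - p.2‖ ^ 2 ∂π =
      ∫ x, ‖x‖ ^ 2 ∂μ + ∫ x, ‖x‖ ^ 2 ∂ν - 2 * ∫ p, ⟪p.1, p.2⟫ ∂π := by
    simp_rw [← hexp]
    rw [integral_sub hI12 hI3, integral_add hI1 hI2, hπ.integral_comp_fst hμ2,
      hπ.integral_comp_snd hν2, integral_const_mul]
  have hIcost : Integrable (fun p : EuclideanSpace ℝ (Fin d) × EuclideanSpace ℝ (Fin d) =>
      ‖p.1 - p.2‖ ^ 2) π := (hI12.sub hI3).congr (ae_of_all _ hexp)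
  rw [relEnt, relEnt, if_pos hμ, if_pos hν]
  calc W2sq μ ν ≤ ∫⁻ p, (‖p.1 - p.2‖₊ : ℝ≥0∞) ^ 2 ∂π := iInf₂_le π hπ
    _ = ENNReal.ofReal (∫ p, ‖p.1 - p.2‖ ^ 2 ∂π) := by
      rw [ofReal_integral_eq_lintegral_ofReal hIcost (ae_of_all _ fun p => sq_nonneg _)]
      refine lintegral_congr fun p => ?_
      rw [ENNReal.ofReal_pow (norm_nonneg _), ofReal_norm, enorm_eq_nnnorm]
    _ ≤ ENNReal.ofReal (2 * ∫ x, Real.log (μ.rnDeriv (stdGaussian d) x).toReal ∂μ +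
        2 * ∫ x, Real.log (ν.rnDeriv (stdGaussian d) x).toReal ∂ν) :=
      ENNReal.ofReal_le_ofReal (by linarith)
    _ ≤ _ := by
      refine ENNReal.ofReal_add_le.trans_eq ?_
      rw [ENNReal.ofReal_mul zero_le_two, ENNReal.ofReal_mul zero_le_two, ENNReal.ofReal_ofNat]
end

section
/- Let d ≥ 1 and let γ be the standard Gaussian measure on ℝ^d. Let A be a symmetric positive definite d×d matrix, let μ be the centered Gaussian measure on ℝ^d with covariance matrix A, and let ν be the Gaussian measure on ℝ^d with arbitrary mean m ∈ ℝ^d and covariance matrix A⁻¹. Then equality holds in the symmetrized Talagrand inequality: W₂(μ, ν)² = 2 Ent_γ(μ) + 2 Ent_γ(ν). -/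
open MeasureTheory ENNReal
open scoped RealInnerProductSpace

/-- The Gaussian measure `N(m, A)` on `ℝ^d` with mean `m` and (invertible) covariance
matrix `A`, given by its density with respect to Lebesgue measure. -/
noncomputable def gaussianMeasure {d : ℕ} (m : EuclideanSpace ℝ (Fin d))
    (A : Matrix (Fin d) (Fin d) ℝ) : Measure (EuclideanSpace ℝ (Fin d)) :=
  volume.withDensity fun x =>
    ENNReal.ofReal (((2 * Real.pi) ^ d * A.det) ^ (-(1 : ℝ) / 2) *
      Real.exp (-⟪x - m, Matrix.toEuclideanLin A⁻¹ (x - m)⟫ / 2))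

open scoped MatrixOrder in
theorem Matrix.PosDef.exists_mul_transpose_eq {n : Type*} [Fintype n] [DecidableEq n]
    {A : Matrix n n ℝ} (hA : A.PosDef) :
    ∃ M : Matrix n n ℝ, M.det ≠ 0 ∧ M * M.transpose = A := by
  have hs : (CFC.sqrt A).transpose = CFC.sqrt A := by
    simpa [Matrix.IsHermitian] using (Matrix.nonneg_iff_posSemidef.mp (CFC.sqrt_nonneg A)).isHermitian
  have hm : CFC.sqrt A * CFC.sqrt A = A := CFC.sqrt_mul_sqrt_self A hA.posSemidef.nonneg
  refine ⟨CFC.sqrt A, fun h => hA.det_pos.ne' ?_, by rw [hs, hm]⟩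
  rw [← hm, Matrix.det_mul, h, zero_mul]

section Pushforward

variable {d : ℕ}

theorem Matrix.inner_toEuclideanLin_left (M : Matrix (Fin d) (Fin d) ℝ)
    (x y : EuclideanSpace ℝ (Fin d)) :
    ⟪M.toEuclideanLin x, y⟫ = ⟪x, M.transpose.toEuclideanLin y⟫ := by
  rw [← Matrix.conjTranspose_eq_transpose_of_trivial,
    Matrix.toEuclideanLin_conjTranspose_eq_adjoint, LinearMap.adjoint_inner_right]

theorem Matrix.toEuclideanLin_toEuclideanLin (M N : Matrix (Fin d) (Fin d) ℝ)
    (x : EuclideanSpace ℝ (Fin d)) :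
    M.toEuclideanLin (N.toEuclideanLin x) = (M * N).toEuclideanLin x := by
  simp [Matrix.toLpLin_mul_same]

theorem measurable_toEuclideanLin (M : Matrix (Fin d) (Fin d) ℝ) :
    Measurable (M.toEuclideanLin : EuclideanSpace ℝ (Fin d) → _) :=
  M.toEuclideanLin.continuous_of_finiteDimensional.measurable

/-- The quadratic form of `(M A Mᵀ)⁻¹` pulls back along `M` to the one of `A⁻¹`. -/
theorem inner_toEuclideanLin_inv_congr {A M : Matrix (Fin d) (Fin d) ℝ} (hM : M.det ≠ 0)
    (x : EuclideanSpace ℝ (Fin d)) :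
    ⟪M.toEuclideanLin x, (M * A * M.transpose)⁻¹.toEuclideanLin (M.toEuclideanLin x)⟫ =
      ⟪x, A⁻¹.toEuclideanLin x⟫ := by
  have hM' : IsUnit M.det := hM.isUnit
  rw [Matrix.inner_toEuclideanLin_left, Matrix.toEuclideanLin_toEuclideanLin,
    Matrix.toEuclideanLin_toEuclideanLin, Matrix.mul_inv_rev, Matrix.mul_inv_rev,
    ← Matrix.mul_assoc M.transpose, Matrix.mul_nonsing_inv _ (by rwa [Matrix.det_transpose]),
    Matrix.one_mul, Matrix.mul_assoc, Matrix.nonsing_inv_mul _ hM', Matrix.mul_one]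

theorem abs_mul_sq_mul_rpow_neg_half {c t : ℝ} (hc : c ≠ 0) (ht : 0 ≤ t) :
    |c| * (c ^ 2 * t) ^ (-(1 : ℝ) / 2) = t ^ (-(1 : ℝ) / 2) := by
  rw [Real.mul_rpow (sq_nonneg c) ht, ← sq_abs, ← Real.rpow_natCast, ← Real.rpow_mul (abs_nonneg c),
    ← mul_assoc]
  norm_num [Real.rpow_neg_one, hc]

theorem gaussianMeasure_map_affine {A M : Matrix (Fin d) (Fin d) ℝ} (hA : 0 < A.det)
    (hM : M.det ≠ 0) (m : EuclideanSpace ℝ (Fin d)) :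
    (gaussianMeasure 0 A).map (fun x => M.toEuclideanLin x + m) =
      gaussianMeasure m (M * A * M.transpose) := by
  have hT := measurable_toEuclideanLin M
  have hN := measurable_toEuclideanLin (M * A * M.transpose)⁻¹
  have hvol : (volume : Measure (EuclideanSpace ℝ (Fin d))).map
      (fun x => M.toEuclideanLin x + m) = ENNReal.ofReal |M.det|⁻¹ • volume := by
    have h := Measure.map_linearMap_addHaar_eq_smul_addHaar
      (volume : Measure (EuclideanSpace ℝ (Fin d))) (f := M.toEuclideanLin)
      (by simpa using hM)
    rw [show (fun x => M.toEuclideanLin x + m) = (fun y => y + m) ∘ M.toEuclideanLin from rfl,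
      ← Measure.map_map (measurable_add_const m) hT, h, Measure.map_smul,
      map_add_right_eq_self]
    simp [abs_inv]
  set g : EuclideanSpace ℝ (Fin d) → ℝ≥0∞ := fun y =>
    ENNReal.ofReal (((2 * Real.pi) ^ d * (M * A * M.transpose).det) ^ (-(1 : ℝ) / 2) *
      Real.exp (-⟪y - m, (M * A * M.transpose)⁻¹.toEuclideanLin (y - m)⟫ / 2)) with hg
  have hgm : Measurable g := by fun_prop
  have hdens : ∀ x : EuclideanSpace ℝ (Fin d),
      ENNReal.ofReal (((2 * Real.pi) ^ d * A.det) ^ (-(1 : ℝ) / 2) *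
        Real.exp (-⟪x - 0, A⁻¹.toEuclideanLin (x - 0)⟫ / 2)) =
      ENNReal.ofReal |M.det| * g (M.toEuclideanLin x + m) := by
    intro x
    rw [hg]
    dsimp only
    rw [← ENNReal.ofReal_mul (abs_nonneg _), add_sub_cancel_right,
      inner_toEuclideanLin_inv_congr hM, sub_zero, ← mul_assoc,
      show (2 * Real.pi) ^ d * (M * A * M.transpose).det =
        M.det ^ 2 * ((2 * Real.pi) ^ d * A.det) by
          rw [Matrix.det_mul, Matrix.det_mul, Matrix.det_transpose]; ring,
      abs_mul_sq_mul_rpow_neg_half hM (by positivity)]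
  have he : Measurable (fun x => M.toEuclideanLin x + m) := by fun_prop
  ext s hs
  rw [Measure.map_apply he hs, gaussianMeasure, gaussianMeasure, withDensity_apply _ (he hs),
    withDensity_apply _ hs, lintegral_congr hdens,
    lintegral_const_mul _ (show Measurable fun x => g (_ + m) from hgm.comp he),
    ← setLIntegral_map hs hgm he, hvol,
    Measure.restrict_smul, lintegral_smul_measure, smul_eq_mul, ← mul_assoc,
    ← ENNReal.ofReal_mul (abs_nonneg _), mul_inv_cancel₀ (abs_ne_zero.mpr hM)]
  simp [hg]

end Pushforward

section Moments

variable {d : ℕ}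

theorem two_pi_pow_rpow_neg_half (d : ℕ) :
    ((2 * Real.pi) ^ d) ^ (-(1 : ℝ) / 2) = (2 * Real.pi) ^ (-(d : ℝ) / 2) := by
  rw [← Real.rpow_natCast, ← Real.rpow_mul (by positivity)]
  congr 1
  ring

theorem gaussianMeasure_zero_one (d : ℕ) : gaussianMeasure 0 1 = stdGaussian d := by
  simp [gaussianMeasure, stdGaussian, two_pi_pow_rpow_neg_half]

theorem integrable_exp_neg_mul_norm_sq {b : ℝ} (hb : 0 < b) :
    Integrable fun x : EuclideanSpace ℝ (Fin d) => Real.exp (-b * ‖x‖ ^ 2) := by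
  refine Integrable.of_integral_ne_zero ?_
  rw [GaussianFourier.integral_rexp_neg_mul_sq_norm hb]
  positivity

instance isProbabilityMeasure_stdGaussian (d : ℕ) : IsProbabilityMeasure (stdGaussian d) where
  measure_univ := by
    have h2 : (0 : ℝ) < 1 / 2 := by norm_num
    have he : ∀ x : EuclideanSpace ℝ (Fin d), -‖x‖ ^ 2 / 2 = -(1 / 2) * ‖x‖ ^ 2 := fun x => by ring
    simp_rw [stdGaussian, withDensity_apply _ MeasurableSet.univ, Measure.restrict_univ, he]
    rw [← ofReal_integral_eq_lintegral_ofReal ((integrable_exp_neg_mul_norm_sq h2).const_mul _)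
      (Filter.Eventually.of_forall fun x => by positivity), integral_const_mul,
      GaussianFourier.integral_rexp_neg_mul_sq_norm h2, finrank_euclideanSpace, Fintype.card_fin,
      show Real.pi / (1 / 2) = 2 * Real.pi by ring, ← Real.rpow_add (by positivity), neg_div,
      neg_add_cancel, Real.rpow_zero, ENNReal.ofReal_one]

theorem memLp_two_id_stdGaussian (d : ℕ) :
    MemLp (id : EuclideanSpace ℝ (Fin d) → _) 2 (stdGaussian d) := by
  rw [memLp_two_iff_integrable_sq_norm aestronglyMeasurable_id, stdGaussian,
    integrable_withDensity_iff (by fun_prop) (by simp)]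
  refine ((integrable_exp_neg_mul_norm_sq (d := d) (b := 1 / 4) (by norm_num)).const_mul
    (4 * (2 * Real.pi) ^ (-(d : ℝ) / 2))).mono' (by fun_prop)
    (Filter.Eventually.of_forall fun x => ?_)
  rw [ENNReal.toReal_ofReal (by positivity), Real.norm_of_nonneg (by positivity), id]
  have hexp : Real.exp (-‖x‖ ^ 2 / 2) =
      Real.exp (-(‖x‖ ^ 2 / 4)) * Real.exp (-(1 / 4) * ‖x‖ ^ 2) := by
    rw [← Real.exp_add]; congr 1; ring
  have hle : ‖x‖ ^ 2 * Real.exp (-(‖x‖ ^ 2 / 4)) ≤ 4 := by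
    rw [Real.exp_neg, ← div_eq_mul_inv, div_le_iff₀ (Real.exp_pos _)]
    linarith [Real.add_one_le_exp (‖x‖ ^ 2 / 4)]
  rw [hexp]
  calc _ = ‖x‖ ^ 2 * Real.exp (-(‖x‖ ^ 2 / 4)) *
        ((2 * Real.pi) ^ (-(d : ℝ) / 2) * Real.exp (-(1 / 4) * ‖x‖ ^ 2)) := by ring
    _ ≤ 4 * ((2 * Real.pi) ^ (-(d : ℝ) / 2) * Real.exp (-(1 / 4) * ‖x‖ ^ 2)) := by gcongr
    _ = _ := by ring

variable {A : Matrix (Fin d) (Fin d) ℝ}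

theorem Matrix.PosDef.exists_gaussianMeasure_eq_map (hA : A.PosDef)
    (m : EuclideanSpace ℝ (Fin d)) :
    ∃ M : Matrix (Fin d) (Fin d) ℝ,
      gaussianMeasure m A = (stdGaussian d).map (fun x => M.toEuclideanLin x + m) := by
  obtain ⟨M, hM, hMA⟩ := hA.exists_mul_transpose_eq
  refine ⟨M, ?_⟩
  rw [← gaussianMeasure_zero_one, gaussianMeasure_map_affine (by simp) hM, Matrix.mul_one, hMA]

theorem isProbabilityMeasure_gaussianMeasure (hA : A.PosDef) (m : EuclideanSpace ℝ (Fin d)) :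
    IsProbabilityMeasure (gaussianMeasure m A) := by
  obtain ⟨M, hM⟩ := hA.exists_gaussianMeasure_eq_map m
  rw [hM]
  exact Measure.isProbabilityMeasure_map
    ((measurable_toEuclideanLin M).add_const m).aemeasurable

theorem memLp_two_id_gaussianMeasure (hA : A.PosDef) (m : EuclideanSpace ℝ (Fin d)) :
    MemLp (id : EuclideanSpace ℝ (Fin d) → _) 2 (gaussianMeasure m A) := by
  obtain ⟨M, hM⟩ := hA.exists_gaussianMeasure_eq_map m
  rw [hM, memLp_map_measure_iff aestronglyMeasurable_id
    ((measurable_toEuclideanLin M).add_const m).aemeasurable]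
  exact ((LinearMap.toContinuousLinearMap M.toEuclideanLin).comp_memLp'
    (memLp_two_id_stdGaussian d)).add (memLp_const m)

theorem integrable_inner_toEuclideanLin {μ : Measure (EuclideanSpace ℝ (Fin d))}
    [IsFiniteMeasure μ] (hμ : MemLp id 2 μ) (B : Matrix (Fin d) (Fin d) ℝ)
    (m : EuclideanSpace ℝ (Fin d)) :
    Integrable (fun x => ⟪x - m, B.toEuclideanLin (x - m)⟫) μ := by
  have hB := measurable_toEuclideanLin B
  have hsub : MemLp (fun x => x - m) 2 μ := hμ.sub (memLp_const m)
  refine (hsub.integrable_norm_pow (by norm_num) |>.const_mul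
    ‖LinearMap.toContinuousLinearMap B.toEuclideanLin‖).mono' (by fun_prop)
    (Filter.Eventually.of_forall fun x => ?_)
  calc _ ≤ ‖x - m‖ * ‖B.toEuclideanLin (x - m)‖ := norm_inner_le_norm _ _
    _ ≤ ‖x - m‖ * (‖LinearMap.toContinuousLinearMap B.toEuclideanLin‖ * ‖x - m‖) := by
      gcongr
      exact (LinearMap.toContinuousLinearMap B.toEuclideanLin).le_opNorm (x - m)
    _ = _ := by simp; ring

theorem integral_inner_gaussianMeasure_zero (hA : A.PosDef) (m : EuclideanSpace ℝ (Fin d)) :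
    ∫ x, ⟪x, m⟫ ∂gaussianMeasure 0 A = 0 := by
  have hneg : (gaussianMeasure 0 A).map (fun x => -x) = gaussianMeasure 0 A := by
    have h := gaussianMeasure_map_affine hA.det_pos
      (M := -1) (by simp [Matrix.det_neg]) 0
    simpa using h
  have h := integral_map (μ := gaussianMeasure 0 A) (φ := fun x => -x) (f := fun x => ⟪x, m⟫)
    (by fun_prop) (by fun_prop)
  rw [hneg] at h
  simp only [inner_neg_left, integral_neg] at h
  linarith

end Moments

section Entropy

variable {d : ℕ} {A : Matrix (Fin d) (Fin d) ℝ}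

/-- The logarithm of the density of `N(m, A)` with respect to the standard Gaussian measure. -/
noncomputable def gaussianLogDensity (m : EuclideanSpace ℝ (Fin d))
    (A : Matrix (Fin d) (Fin d) ℝ) (x : EuclideanSpace ℝ (Fin d)) : ℝ :=
  (‖x‖ ^ 2 - ⟪x - m, A⁻¹.toEuclideanLin (x - m)⟫ - Real.log A.det) / 2

theorem measurable_gaussianLogDensity (m : EuclideanSpace ℝ (Fin d)) :
    Measurable (gaussianLogDensity m A) := by
  have := measurable_toEuclideanLin A⁻¹
  unfold gaussianLogDensity
  fun_prop

theorem gaussianMeasure_eq_withDensity (hA : 0 < A.det) (m : EuclideanSpace ℝ (Fin d)) :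
    gaussianMeasure m A = (stdGaussian d).withDensity
      fun x => ENNReal.ofReal (Real.exp (gaussianLogDensity m A x)) := by
  have := measurable_gaussianLogDensity (A := A) m
  rw [stdGaussian, ← withDensity_mul _ (by fun_prop) (by fun_prop), gaussianMeasure]
  congr 1
  ext x
  rw [Pi.mul_apply, ← ENNReal.ofReal_mul (by positivity)]
  congr 1
  rw [Real.mul_rpow (by positivity) hA.le, two_pi_pow_rpow_neg_half, Real.rpow_def_of_pos hA,
    mul_assoc, mul_assoc, ← Real.exp_add, ← Real.exp_add, gaussianLogDensity]
  congr 2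
  ring

theorem gaussianMeasure_absolutelyContinuous (hA : 0 < A.det) (m : EuclideanSpace ℝ (Fin d)) :
    gaussianMeasure m A ≪ stdGaussian d := by
  rw [gaussianMeasure_eq_withDensity hA]
  exact withDensity_absolutelyContinuous _ _

theorem integrable_gaussianLogDensity (hA : A.PosDef) (m : EuclideanSpace ℝ (Fin d)) :
    Integrable (gaussianLogDensity m A) (gaussianMeasure m A) := by
  have := isProbabilityMeasure_gaussianMeasure hA m
  have hμ := memLp_two_id_gaussianMeasure hA m
  exact ((((memLp_two_iff_integrable_sq_norm aestronglyMeasurable_id).mp hμ).sub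
    (integrable_inner_toEuclideanLin hμ A⁻¹ m)).sub (integrable_const _)).div_const 2

theorem llr_gaussianMeasure_ae_eq (hA : A.PosDef) (m : EuclideanSpace ℝ (Fin d)) :
    llr (gaussianMeasure m A) (stdGaussian d) =ᵐ[gaussianMeasure m A]
      gaussianLogDensity m A := by
  have := measurable_gaussianLogDensity (A := A) m
  have h := (gaussianMeasure_absolutelyContinuous hA.det_pos m).ae_le
    (Measure.rnDeriv_withDensity (stdGaussian d)
      (f := fun x => ENNReal.ofReal (Real.exp (gaussianLogDensity m A x))) (by fun_prop))
  rw [← gaussianMeasure_eq_withDensity hA.det_pos] at h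
  filter_upwards [h] with x hx
  rw [llr, hx, ENNReal.toReal_ofReal (Real.exp_pos _).le, Real.log_exp]

theorem relEnt_gaussianMeasure (hA : A.PosDef) (m : EuclideanSpace ℝ (Fin d)) :
    relEnt (gaussianMeasure m A) (stdGaussian d) =
      ENNReal.ofReal (∫ x, gaussianLogDensity m A x ∂gaussianMeasure m A) := by
  have hllr := llr_gaussianMeasure_ae_eq hA m
  rw [← integral_congr_ae hllr]
  exact if_pos ⟨gaussianMeasure_absolutelyContinuous hA.det_pos m,
     (integrable_congr hllr).mpr (integrable_gaussianLogDensity hA m)⟩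

theorem integral_gaussianLogDensity_nonneg (hA : A.PosDef) (m : EuclideanSpace ℝ (Fin d)) :
    0 ≤ ∫ x, gaussianLogDensity m A x ∂gaussianMeasure m A := by
  have := isProbabilityMeasure_gaussianMeasure hA m
  rw [← integral_congr_ae (llr_gaussianMeasure_ae_eq hA m),
    ← InformationTheory.toReal_klDiv_of_measure_eq
      (gaussianMeasure_absolutelyContinuous hA.det_pos m) (by simp)]
  exact ENNReal.toReal_nonneg

end Entropy

section Transport

theorem MeasureTheory.MeasurePreserving.integral_comp_of_integrable {α β : Type*}
    [MeasurableSpace α] [MeasurableSpace β] {μ : Measure α} {ν : Measure β} {f : α → β}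
    (hf : MeasurePreserving f μ ν) {g : β → ℝ} (hg : Integrable g ν) :
    ∫ x, g (f x) ∂μ = ∫ y, g y ∂ν := by
  obtain ⟨hfm, rfl⟩ := hf
  exact (integral_map hfm.aemeasurable hg.aestronglyMeasurable).symm

section Coupling

variable {E : Type*} [NormedAddCommGroup E] [MeasurableSpace E]
  {π : Measure (E × E)} {μ ν : Measure E}

theorem IsCoupling.W2sq_le (hπ : IsCoupling π μ ν) :
    W2sq μ ν ≤ ∫⁻ p, (‖p.1 - p.2‖₊ : ℝ≥0∞) ^ 2 ∂π :=
  iInf₂_le (f := fun (π : Measure (E × E)) (_ : IsCoupling π μ ν) =>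
    ∫⁻ p, (‖p.1 - p.2‖₊ : ℝ≥0∞) ^ 2 ∂π) π hπ

theorem IsCoupling.integrable_norm_sub_sq (hπ : IsCoupling π μ ν) (hμ : MemLp id 2 μ)
    (hν : MemLp id 2 ν) : Integrable (fun p : E × E => ‖p.1 - p.2‖ ^ 2) π := by
  have h1 : MemLp (Prod.fst : E × E → E) 2 π := by
    rw [← hπ.1] at hμ
    exact hμ.comp_of_map measurable_fst.aemeasurable
  have h2 : MemLp (Prod.snd : E × E → E) 2 π := by
    rw [← hπ.2] at hν
    exact hν.comp_of_map measurable_snd.aemeasurable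
  exact (memLp_two_iff_integrable_sq_norm (h1.sub h2).1).mp (h1.sub h2)

theorem IsCoupling.lintegral_nnnorm_sub_sq (hπ : IsCoupling π μ ν) (hμ : MemLp id 2 μ)
    (hν : MemLp id 2 ν) :
    ∫⁻ p, (‖p.1 - p.2‖₊ : ℝ≥0∞) ^ 2 ∂π = ENNReal.ofReal (∫ p, ‖p.1 - p.2‖ ^ 2 ∂π) := by
  rw [ofReal_integral_eq_lintegral_ofReal (hπ.integrable_norm_sub_sq hμ hν)
    (Filter.Eventually.of_forall fun p => by positivity)]
  refine lintegral_congr fun p => ?_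
  rw [ENNReal.ofReal_pow (norm_nonneg _), ofReal_norm, enorm_eq_nnnorm]

end Coupling

variable {d : ℕ} {A : Matrix (Fin d) (Fin d) ℝ}

theorem norm_sub_sq_eq_gaussianLogDensity (hA : A.PosDef) (m x y : EuclideanSpace ℝ (Fin d)) :
    ‖x - y‖ ^ 2 = 2 * gaussianLogDensity 0 A x + 2 * gaussianLogDensity m A⁻¹ y - 2 * ⟪x, m⟫ +
      ⟪y - (A⁻¹.toEuclideanLin x + m), A.toEuclideanLin (y - (A⁻¹.toEuclideanLin x + m))⟫ := by
  have hdet : IsUnit A.det := hA.det_pos.ne'.isUnit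
  have hsymm : A.transpose = A := by simpa using hA.isHermitian.eq
  have hcancel : A.toEuclideanLin (A⁻¹.toEuclideanLin x) = x := by
    rw [Matrix.toEuclideanLin_toEuclideanLin, Matrix.mul_nonsing_inv _ hdet]
    simp
  obtain ⟨z, rfl⟩ : ∃ z, y = z + m := ⟨y - m, by simp⟩
  have hxz : ⟪A⁻¹.toEuclideanLin x, A.toEuclideanLin z⟫ = ⟪x, z⟫ := by
    rw [real_inner_comm, Matrix.inner_toEuclideanLin_left, hsymm, hcancel, real_inner_comm]
  rw [gaussianLogDensity, gaussianLogDensity, Matrix.nonsing_inv_nonsing_inv _ hdet,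
    Matrix.det_nonsing_inv, Ring.inverse_eq_inv', Real.log_inv, add_sub_cancel_right,
    add_sub_add_right_eq_sub, sub_zero, map_sub, hcancel, inner_sub_left, inner_sub_right,
    inner_sub_right, hxz, real_inner_comm x (A⁻¹.toEuclideanLin x), real_inner_comm x z,
    norm_sub_sq_real, inner_add_right]
  ring

theorem integral_norm_sub_sq_eq_of_isCoupling (hA : A.PosDef) (m : EuclideanSpace ℝ (Fin d))
    {π : Measure (EuclideanSpace ℝ (Fin d) × EuclideanSpace ℝ (Fin d))}
    (hπ : IsCoupling π (gaussianMeasure 0 A) (gaussianMeasure m A⁻¹)) :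
    ∫ p, ‖p.1 - p.2‖ ^ 2 ∂π =
      2 * ∫ x, gaussianLogDensity 0 A x ∂gaussianMeasure 0 A +
      2 * ∫ y, gaussianLogDensity m A⁻¹ y ∂gaussianMeasure m A⁻¹ +
      ∫ p, ⟪p.2 - (A⁻¹.toEuclideanLin p.1 + m),
        A.toEuclideanLin (p.2 - (A⁻¹.toEuclideanLin p.1 + m))⟫ ∂π := by
  have hμ := memLp_two_id_gaussianMeasure hA 0
  have hν := memLp_two_id_gaussianMeasure hA.inv m
  have := isProbabilityMeasure_gaussianMeasure hA 0
  have h1 := integrable_gaussianLogDensity hA 0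
  have h2 := integrable_gaussianLogDensity hA.inv m
  have h3 : Integrable (fun x => ⟪x, m⟫) (gaussianMeasure 0 A) :=
    (hμ.integrable (by norm_num)).inner_const m
  have i3 := integral_inner_gaussianMeasure_zero hA m
  have hcost := hπ.integrable_norm_sub_sq hμ hν
  have hfst : MeasurePreserving Prod.fst π (gaussianMeasure 0 A) := ⟨measurable_fst, hπ.1⟩
  have hsnd : MeasurePreserving Prod.snd π (gaussianMeasure m A⁻¹) := ⟨measurable_snd, hπ.2⟩
  have j1 : ∫ p, gaussianLogDensity 0 A p.1 ∂π = _ :=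
    hfst.integral_comp_of_integrable h1
  have j2 : ∫ p, gaussianLogDensity m A⁻¹ p.2 ∂π = _ :=
    hsnd.integral_comp_of_integrable h2
  have j3 : ∫ p, ⟪p.1, m⟫ ∂π = _ :=
    hfst.integral_comp_of_integrable h3
  replace h1 : Integrable (fun p => gaussianLogDensity 0 A p.1) π :=
    hfst.integrable_comp_of_integrable h1
  replace h2 : Integrable (fun p => gaussianLogDensity m A⁻¹ p.2) π :=
    hsnd.integrable_comp_of_integrable h2
  replace h3 : Integrable (fun p => ⟪p.1, m⟫) π :=
    hfst.integrable_comp_of_integrable h3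
  have hadd : Integrable (fun p => 2 * gaussianLogDensity 0 A p.1 +
      2 * gaussianLogDensity m A⁻¹ p.2) π := (h1.const_mul 2).add (h2.const_mul 2)
  have hsum : Integrable (fun p => 2 * gaussianLogDensity 0 A p.1 +
      2 * gaussianLogDensity m A⁻¹ p.2 - 2 * ⟪p.1, m⟫) π := hadd.sub (h3.const_mul 2)
  have hrest : ∀ p : EuclideanSpace ℝ (Fin d) × EuclideanSpace ℝ (Fin d),
      ⟪p.2 - (A⁻¹.toEuclideanLin p.1 + m),
        A.toEuclideanLin (p.2 - (A⁻¹.toEuclideanLin p.1 + m))⟫ =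
      ‖p.1 - p.2‖ ^ 2 - (2 * gaussianLogDensity 0 A p.1 + 2 * gaussianLogDensity m A⁻¹ p.2 -
        2 * ⟪p.1, m⟫) := fun p => by
    rw [norm_sub_sq_eq_gaussianLogDensity hA m p.1 p.2]; ring
  simp_rw [hrest]
  rw [integral_sub hcost hsum, integral_sub hadd (h3.const_mul 2),
    integral_add (h1.const_mul 2) (h2.const_mul 2), integral_const_mul,
    integral_const_mul, integral_const_mul, j1, j2, j3, i3]
  ring

theorem isCoupling_map_affine (hA : A.PosDef) (m : EuclideanSpace ℝ (Fin d)) :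
    IsCoupling ((gaussianMeasure 0 A).map fun x => (x, A⁻¹.toEuclideanLin x + m))
      (gaussianMeasure 0 A) (gaussianMeasure m A⁻¹) := by
  have hdet : IsUnit A.det := hA.det_pos.ne'.isUnit
  have hsymm : A⁻¹.transpose = A⁻¹ := by simpa using hA.inv.isHermitian.eq
  have hT := measurable_toEuclideanLin A⁻¹
  constructor
  · rw [Measure.map_map measurable_fst (by fun_prop)]
    exact Measure.map_id
  · rw [Measure.map_map measurable_snd (by fun_prop)]
    refine (gaussianMeasure_map_affine hA.det_pos hA.inv.det_pos.ne' m).trans ?_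
    rw [hsymm, Matrix.nonsing_inv_mul _ hdet, Matrix.one_mul]

end Transport

/-- **Equality cases of the symmetrized Talagrand inequality, sufficiency**: if `A` is a
symmetric positive definite matrix, `μ = N(0, A)` and `ν = N(m, A⁻¹)` for any `m ∈ ℝ^d`, then
`W₂(μ,ν)² = 2 Ent_γ(μ) + 2 Ent_γ(ν)`. -/
theorem symmetrized_talagrand_eq_of_gaussian (d : ℕ) (hd : 1 ≤ d)
    (A : Matrix (Fin d) (Fin d) ℝ) (hA : A.PosDef) (hAsymm : A.IsSymm)
    (m : EuclideanSpace ℝ (Fin d)) :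
    W2sq (gaussianMeasure 0 A) (gaussianMeasure m A⁻¹) =
      2 * relEnt (gaussianMeasure 0 A) (stdGaussian d) +
      2 * relEnt (gaussianMeasure m A⁻¹) (stdGaussian d) := by
  have hμ := memLp_two_id_gaussianMeasure hA 0
  have hν := memLp_two_id_gaussianMeasure hA.inv m
  have n1 := integral_gaussianLogDensity_nonneg hA 0
  have n2 := integral_gaussianLogDensity_nonneg hA.inv m
  have hT := measurable_toEuclideanLin A
  have hT' := measurable_toEuclideanLin A⁻¹
  rw [relEnt_gaussianMeasure hA, relEnt_gaussianMeasure hA.inv,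
    show (2 : ℝ≥0∞) * _ + 2 * _ = ENNReal.ofReal 2 * _ + ENNReal.ofReal 2 * _ by
      rw [ENNReal.ofReal_ofNat],
    ← ENNReal.ofReal_mul zero_le_two, ← ENNReal.ofReal_mul zero_le_two,
    ← ENNReal.ofReal_add (by positivity) (by positivity)]
  apply le_antisymm
  · have hπ := isCoupling_map_affine hA m
    refine hπ.W2sq_le.trans_eq ?_
    rw [hπ.lintegral_nnnorm_sub_sq hμ hν, integral_norm_sub_sq_eq_of_isCoupling hA m hπ]
    congr 1
    rw [add_eq_left, integral_map (by fun_prop) (by fun_prop)]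
    simp
  · refine le_iInf₂ fun π hπ => ?_
    rw [hπ.lintegral_nnnorm_sub_sq hμ hν, integral_norm_sub_sq_eq_of_isCoupling hA m hπ]
    refine ENNReal.ofReal_le_ofReal (le_add_of_nonneg_right (integral_nonneg fun p => ?_))
    exact (Matrix.isPositive_toEuclideanLin_iff.mpr hA.posSemidef).inner_nonneg_right _
end
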